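/- Let b = 1/48, let d ≥ 2 be an integer and let 0 < μ < 1. Then there exists n₀ = n₀(d, μ) such that the following holds for all n ≥ n₀. Let F ⊆ ℝ be a subfield of ℝ, let V be a vector space over ℝ, let u₁, …, u_k ∈ V be nonzero vectors, and let p₁, …, p_n ∈ V be distinct vectors that do not all lie in a common (d−1)-dimensional affine subspace of V (over ℝ). Suppose that for all x, y ∈ {1, …, n} there is some i ∈ {1, …, k} with p_x − p_y ∈ span_F(u_i). Then there exists a subset I ⊆ {1, …, k} such that u_ℓ ∈ span_F(u_i : i ∈ I) for at least d·|I| + (b·d − μ)·n + 1 indices ℓ ∈ {1, …, k}. -/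

import Mathlib

universe u

/-!
Let `m` be the dimension of the `F`-span of the differences `p x - p y`, let `D` be the number of
`F`-lines spanned by single differences, and take for `I` a basis among the `u i` lying in the
`F`-span of all differences. At least `D` of the `u ℓ` lie in that span, so it suffices that
`d * m + (d / 48 - μ) * n + 1 ≤ D`, which follows for large `n` from a convex combination of
`m ^ 2 / 2 ≤ D` and `d * n / 48 ≤ D`.

The first inequality holds because distinct pairs among `m + 1` affinely independent points have
distinct directions. For the second, pass to real directions. If `d ≤ 6`, a generic projection to
the plane and the bound `n - 1 ≤ 4 * D` for noncollinear planar points suffice: in the cyclic order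
of directions, between two consecutive lines through a point there are many directions of lines not
through it. If `7 ≤ d`, add the points at infinity of the connecting lines, so that each connecting
line contains at least three points, with at most one at infinity, and bound the dimension by the
rank of the matrix of collinear triples, as Dvir, Saraf and Wigderson do for Kelly's theorem.
-/

open Finset Filter Matrix Module

theorem exists_norm_fderiv_le {E : Type*} [NormedAddCommGroup E] [InnerProductSpace ℝ E]
    [FiniteDimensional ℝ E] {f : E → ℝ} (hf : Differentiable ℝ f) (hbdd : BddBelow (Set.range f))
    {ε : ℝ} (hε : 0 < ε) : ∃ y, ‖fderiv ℝ f y‖ ≤ ε := by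
  obtain ⟨b, hb⟩ := hbdd
  have hb' (y : E) : b ≤ f y := hb ⟨y, rfl⟩
  have hgap : 0 ≤ f 0 - b := sub_nonneg.2 (hb' 0)
  obtain ⟨δ, hδ, hδε⟩ : ∃ δ : ℝ, 0 < δ ∧ 4 * δ * (f 0 - b) ≤ ε ^ 2 := by
    refine ⟨ε ^ 2 / (4 * (f 0 - b + 1)), by positivity, ?_⟩
    rw [mul_div_assoc', div_mul_eq_mul_div, div_le_iff₀ (by positivity)]
    nlinarith [sq_nonneg ε]
  have hcont : Continuous fun y ↦ f y + δ * ‖y‖ ^ 2 := by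
    have := hf.continuous
    fun_prop
  have hcoercive : Tendsto (fun y ↦ f y + δ * ‖y‖ ^ 2) (cocompact E) atTop :=
    tendsto_atTop_add_left_of_le _ b hb' <|
      ((tendsto_pow_atTop two_ne_zero).comp tendsto_norm_cocompact_atTop).const_mul_atTop hδ
  obtain ⟨y, hy⟩ := hcont.exists_forall_le hcoercive
  have hderiv : fderiv ℝ f y = -((2 * δ) • innerSL ℝ y) := by
    have hzero := (IsMinOn.isLocalMin (isMinOn_univ_iff.2 hy) univ_mem).hasFDerivAt_eq_zero
      ((hf y).hasFDerivAt.add ((hasStrictFDerivAt_norm_sq y).hasFDerivAt.const_mul δ))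
    rw [eq_neg_iff_add_eq_zero, ← hzero]
    ext z
    simp [mul_assoc, mul_left_comm]
  refine ⟨y, ?_⟩
  rw [hderiv, norm_neg, norm_smul, innerSL_apply_norm, Real.norm_of_nonneg (by positivity)]
  have hy0 : f y + δ * ‖y‖ ^ 2 ≤ f 0 := by simpa using hy 0
  refine le_of_sq_le_sq ?_ hε.le
  nlinarith [hb' y]

section Scaling

variable {ι C : Type*} [Fintype ι] [Fintype C]

/-- The tilt of a nonnegative vector `a` by a potential `y`: the probability vector proportional to
`a c * exp (y c)` (the zero vector if `a = 0`). -/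
noncomputable def tilt (a y : C → ℝ) (c : C) : ℝ :=
  a c * Real.exp (y c) / ∑ c', a c' * Real.exp (y c')

theorem tilt_nonneg {a : C → ℝ} (ha : ∀ c, 0 ≤ a c) (y : C → ℝ) (c : C) : 0 ≤ tilt a y c :=
  div_nonneg (mul_nonneg (ha c) (Real.exp_pos _).le)
    (sum_nonneg fun c' _ ↦ mul_nonneg (ha c') (Real.exp_pos _).le)

theorem sum_mul_exp_pos {a : C → ℝ} (ha : ∀ c, 0 ≤ a c) (hne : ∃ c, a c ≠ 0) (y : C → ℝ) :
    0 < ∑ c, a c * Real.exp (y c) := by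
  obtain ⟨c, hc⟩ := hne
  exact sum_pos' (fun c' _ ↦ mul_nonneg (ha c') (Real.exp_pos _).le)
    ⟨c, mem_univ c, mul_pos ((ha c).lt_of_ne' hc) (Real.exp_pos _)⟩

theorem sum_tilt {a : C → ℝ} (ha : ∀ c, 0 ≤ a c) (hne : ∃ c, a c ≠ 0) (y : C → ℝ) :
    ∑ c, tilt a y c = 1 := by
  simp only [tilt, ← sum_div]
  exact div_self (sum_mul_exp_pos ha hne y).ne'

/-- Jensen: each `log (a c) + y c` is at most the right-hand side. -/
theorem sum_mul_log_add_le_log_sum_mul_exp {a θ : C → ℝ} (ha : ∀ c, 0 ≤ a c)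
    (hθ : ∀ c, 0 ≤ θ c) (hsum : ∑ c, θ c = 1) (hsupp : ∀ c, θ c ≠ 0 → a c ≠ 0) (y : C → ℝ) :
    ∑ c, θ c * (Real.log (a c) + y c) ≤ Real.log (∑ c, a c * Real.exp (y c)) := by
  rw [← one_mul (Real.log (∑ c, _)), ← hsum, sum_mul]
  refine sum_le_sum fun c _ ↦ ?_
  obtain hc | hc := eq_or_ne (θ c) 0
  · simp [hc]
  have hac : 0 < a c := (ha c).lt_of_ne' (hsupp c hc)
  refine mul_le_mul_of_nonneg_left ?_ (hθ c)
  rw [← Real.log_exp (y c), ← Real.log_mul hac.ne' (Real.exp_pos _).ne']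
  exact Real.log_le_log (by positivity) <|
    single_le_sum (f := fun c' ↦ a c' * Real.exp (y c'))
      (fun c' _ ↦ mul_nonneg (ha c') (Real.exp_pos _).le) (mem_univ c)

theorem hasFDerivAt_log_sum_mul_exp {a : C → ℝ} (ha : ∀ c, 0 ≤ a c) (hne : ∃ c, a c ≠ 0)
    (y : EuclideanSpace ℝ C) :
    HasFDerivAt (fun y : EuclideanSpace ℝ C ↦ Real.log (∑ c, a c * Real.exp (y c)))
      (∑ c, tilt a y c • EuclideanSpace.proj (𝕜 := ℝ) c) y := by
  have h := (HasFDerivAt.fun_sum fun c (_ : c ∈ univ) ↦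
    (EuclideanSpace.proj (𝕜 := ℝ) c).hasFDerivAt (x := y) |>.exp.const_mul (a c)).log
      (sum_mul_exp_pos ha hne y).ne'
  refine h.congr_fderiv ?_
  simp only [smul_sum, smul_smul, inv_mul_eq_div, tilt]
  rfl

/-- The tilts are the gradient of the convex function
`y ↦ ∑ i, w i * (log (∑ c, A i c * exp (y c)) - ∑ c, θ i c * y c)`, up to the column sums of `θ`;
the function need not attain its infimum, which is why an `ε` is lost. -/
theorem exists_sum_mul_le_sum_mul_tilt {A θ : ι → C → ℝ} {w : ι → ℝ} (hA : ∀ i c, 0 ≤ A i c)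
    (hw : ∀ i, 0 ≤ w i) (hθ : ∀ i c, 0 ≤ θ i c) (hsum : ∀ i, ∑ c, θ i c = 1)
    (hsupp : ∀ i c, θ i c ≠ 0 → A i c ≠ 0) {ε : ℝ} (hε : 0 < ε) :
    ∃ y : C → ℝ, ∀ c, ∑ i, w i * θ i c - ε ≤ ∑ i, w i * tilt (A i) y c := by
  classical
  have hne (i : ι) : ∃ c, A i c ≠ 0 := by
    obtain ⟨c, -, hc⟩ := exists_ne_zero_of_sum_ne_zero ((hsum i).trans_ne one_ne_zero)
    exact ⟨c, hsupp i c hc⟩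
  let f (y : EuclideanSpace ℝ C) : ℝ :=
    ∑ i, w i * (Real.log (∑ c, A i c * Real.exp (y c)) - ∑ c, θ i c * y c)
  have hderiv (y : EuclideanSpace ℝ C) : HasFDerivAt f
      (∑ i, w i • (∑ c, tilt (A i) y c • EuclideanSpace.proj (𝕜 := ℝ) c -
        ∑ c, θ i c • EuclideanSpace.proj c)) y :=
    HasFDerivAt.fun_sum fun i _ ↦ ((hasFDerivAt_log_sum_mul_exp (hA i) (hne i) y).sub
      (HasFDerivAt.fun_sum fun c _ ↦
        (EuclideanSpace.proj (𝕜 := ℝ) c).hasFDerivAt.const_mul (θ i c))).const_mul (w i)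
  have hbdd : BddBelow (Set.range f) := by
    refine ⟨∑ i, w i * ∑ c, θ i c * Real.log (A i c), ?_⟩
    rintro _ ⟨y, rfl⟩
    refine sum_le_sum fun i _ ↦ mul_le_mul_of_nonneg_left ?_ (hw i)
    rw [le_sub_iff_add_le, ← sum_add_distrib]
    simpa only [mul_add] using
      sum_mul_log_add_le_log_sum_mul_exp (hA i) (hθ i) (hsum i) (hsupp i) y
  obtain ⟨y, hy⟩ := exists_norm_fderiv_le (fun y ↦ (hderiv y).differentiableAt) hbdd hε
  refine ⟨y, fun c ↦ ?_⟩
  have hpartial : fderiv ℝ f y (EuclideanSpace.single c 1) =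
      ∑ i, w i * tilt (A i) y c - ∑ i, w i * θ i c := by
    rw [(hderiv y).fderiv]
    simp [mul_sub, sum_sub_distrib]
  have hle := (abs_le.1 ((fderiv ℝ f y).le_of_opNorm_le hy (EuclideanSpace.single c 1))).1
  rw [hpartial, PiLp.norm_single, norm_one, mul_one] at hle
  linarith

end Scaling

section Rank

variable {C : Type*} [Fintype C]

theorem trace_mul_self_eq_sum_eigenvalues_sq [DecidableEq C] {G : Matrix C C ℝ}
    (hG : G.IsHermitian) : (G * G).trace = ∑ c, hG.eigenvalues c ^ 2 := by
  conv_lhs => rw [hG.spectral_theorem, ← map_mul, Unitary.conjStarAlgAut_apply,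
    trace_mul_cycle, Unitary.coe_star_mul_self, one_mul, diagonal_mul_diagonal, trace_diagonal]
  simp only [sq, Function.comp_apply, RCLike.ofReal_real_eq_id, id_eq]

theorem sq_trace_le_rank_mul_trace_mul_self {G : Matrix C C ℝ} (hG : G.IsHermitian) :
    G.trace ^ 2 ≤ G.rank * (G * G).trace := by
  classical
  have htrace : G.trace = ∑ c with hG.eigenvalues c ≠ 0, hG.eigenvalues c := by
    rw [sum_filter_ne_zero, hG.trace_eq_sum_eigenvalues]
    rfl
  rw [hG.rank_eq_card_non_zero_eigs, Fintype.card_subtype, htrace,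
    trace_mul_self_eq_sum_eigenvalues_sq hG]
  refine sq_sum_le_card_mul_sum_sq.trans ?_
  gcongr
  exact subset_univ _

theorem card_le_rank_add_sum_of_diag_eq_one [DecidableEq C] {H : Matrix C C ℝ} (hH : H.IsSymm)
    (hdiag : ∀ c, H c c = 1) :
    (Fintype.card C : ℝ) ≤ H.rank + ∑ c, ∑ c' ∈ {c}ᶜ, H c c' ^ 2 := by
  have htrace : H.trace = Fintype.card C := by simp [trace, hdiag]
  have htrace_sq : (H * H).trace = Fintype.card C + ∑ c, ∑ c' ∈ {c}ᶜ, H c c' ^ 2 := by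
    have hrow (c : C) : (H * H) c c = 1 + ∑ c' ∈ {c}ᶜ, H c c' ^ 2 := by
      rw [mul_apply, Fintype.sum_eq_add_sum_compl c, hdiag, mul_one]
      exact congrArg (1 + ·) <| sum_congr rfl fun c' _ ↦ by rw [hH.apply c c', sq]
    simp [trace, hrow, sum_add_distrib]
  have hle := sq_trace_le_rank_mul_trace_mul_self (G := H) (by simpa [IsHermitian] using hH.eq)
  rw [htrace, htrace_sq] at hle
  have hrank : (H.rank : ℝ) ≤ Fintype.card C := mod_cast H.rank_le_card_width
  have hnonneg : 0 ≤ ∑ c, ∑ c' ∈ {c}ᶜ, H c c' ^ 2 := by positivity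
  obtain hC | hC := (Nat.cast_nonneg (α := ℝ) (Fintype.card C)).eq_or_lt
  · rw [← hC]
    positivity
  · nlinarith

/-- Rescale `G` to have unit diagonal. -/
theorem card_le_rank_add_sum_sq_div [DecidableEq C] {G : Matrix C C ℝ} (hG : G.IsSymm)
    (hdiag : ∀ c, 0 < G c c) :
    (Fintype.card C : ℝ) ≤ G.rank + ∑ c, ∑ c' ∈ {c}ᶜ, G c c' ^ 2 / (G c c * G c' c') := by
  let t (c : C) : ℝ := (√(G c c))⁻¹
  have ht (c : C) : t c ^ 2 = (G c c)⁻¹ := by rw [inv_pow, Real.sq_sqrt (hdiag c).le]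
  have hH (c c' : C) : (diagonal t * G * diagonal t) c c' = t c * G c c' * t c' := by
    rw [mul_diagonal, diagonal_mul]
  have hunit : IsUnit (diagonal t).det := by
    rw [det_diagonal, isUnit_iff_ne_zero]
    exact prod_ne_zero_iff.2 fun c _ ↦ inv_ne_zero (Real.sqrt_ne_zero'.2 (hdiag c))
  have hsymm : (diagonal t * G * diagonal t).IsSymm := by
    simp only [IsSymm, transpose_mul, diagonal_transpose, hG.eq, Matrix.mul_assoc]
  have hle := card_le_rank_add_sum_of_diag_eq_one hsymm fun c ↦ by
    rw [hH, mul_right_comm, ← sq, ht, inv_mul_cancel₀ (hdiag c).ne']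
  simp only [hH, mul_pow, ht] at hle
  rw [rank_mul_eq_left_of_isUnit_det _ _ hunit, rank_mul_eq_right_of_isUnit_det _ _ hunit] at hle
  convert hle using 6
  rw [mul_right_comm, ← mul_inv, inv_mul_eq_div]

end Rank

section PairWeight

variable {ι C : Type*} [Fintype ι]

/-- The total weight of the rows of `M` whose support contains both columns `a` and `b`. -/
noncomputable def pairWeight (M : Matrix ι C ℝ) (w : ι → ℝ) (a b : C) : ℝ :=
  ∑ i with M i a ≠ 0 ∧ M i b ≠ 0, w i

theorem sq_transpose_mul_self_apply_le {B : Matrix ι C ℝ} {w : ι → ℝ}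
    {s : ι → C → ℝ} (hw : ∀ i, 0 ≤ w i)
    (hs : ∀ i c, 0 ≤ s i c) (hB : ∀ i c, B i c ^ 2 = w i * s i c) (a b : C) :
    (Bᵀ * B) a b ^ 2 ≤ pairWeight B w a b * ∑ i, w i * (s i a * s i b) := by
  have hsum : (Bᵀ * B) a b = ∑ i with B i a ≠ 0 ∧ B i b ≠ 0, B i a * B i b := by
    rw [mul_apply, sum_filter_of_ne fun i _ h ↦ by simpa using h]
    rfl
  have hnonneg (i : ι) : 0 ≤ w i * (s i a * s i b) :=
    mul_nonneg (hw i) (mul_nonneg (hs i a) (hs i b))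
  rw [hsum]
  refine (sum_sq_le_sum_mul_sum_of_sq_le_mul _ (fun i _ ↦ hw i) (fun i _ ↦ hnonneg i)
    fun i _ ↦ Eq.le ?_).trans (mul_le_mul_of_nonneg_left ?_ (sum_nonneg fun i _ ↦ hw i))
  · rw [mul_pow, hB, hB]
    ring
  · exact sum_le_sum_of_subset_of_nonneg (filter_subset _ _) fun i _ _ ↦ hnonneg i

end PairWeight

/-- Multiply the rows of `M` by `√(w i / ∑ c, M i c ^ 2 * exp (y c))` and the columns by
`exp (y c / 2)`. -/
theorem exists_rank_eq_sq_eq_mul_tilt {ι C : Type*} [Finite ι] [Fintype C] {M : Matrix ι C ℝ}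
    {w : ι → ℝ} (hw : ∀ i, 0 < w i) (hM : ∀ i, ∃ c, M i c ≠ 0) (y : C → ℝ) :
    ∃ B : Matrix ι C ℝ, B.rank = M.rank ∧ (∀ i c, B i c = 0 ↔ M i c = 0) ∧
      ∀ i c, B i c ^ 2 = w i * tilt (fun c ↦ M i c ^ 2) y c := by
  classical
  have := Fintype.ofFinite ι
  let Z (i : ι) : ℝ := ∑ c, M i c ^ 2 * Real.exp (y c)
  have hZ (i : ι) : 0 < w i / Z i := by
    obtain ⟨c, hc⟩ := hM i
    exact div_pos (hw i) (sum_mul_exp_pos (fun c ↦ sq_nonneg _) ⟨c, pow_ne_zero 2 hc⟩ y)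
  refine ⟨diagonal (fun i ↦ √(w i / Z i)) * M * diagonal (fun c ↦ Real.exp (y c / 2)),
    ?_, fun i c ↦ ?_, fun i c ↦ ?_⟩
  · rw [rank_mul_eq_left_of_isUnit_det, rank_mul_eq_right_of_isUnit_det]
    all_goals rw [det_diagonal, isUnit_iff_ne_zero, prod_ne_zero_iff]
    · exact fun i _ ↦ (Real.sqrt_pos.2 (hZ i)).ne'
    · exact fun c _ ↦ (Real.exp_pos _).ne'
  · simp [mul_diagonal, diagonal_mul, (Real.sqrt_pos.2 (hZ i)).ne']
  · rw [mul_diagonal, diagonal_mul, mul_pow, mul_pow, Real.sq_sqrt (hZ i).le, ← Real.exp_nat_mul,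
      Nat.cast_two, mul_div_cancel₀ _ two_ne_zero, tilt]
    ring

section Design

variable {ι C : Type*} [Fintype C]

/-- Split according to whether `c' ∈ P`; if not, then `c ∈ P` and the roles of `c`, `c'` swap. -/
theorem sum_div_mul_le_of_row_sum_le [DecidableEq C] {N : C → C → ℝ} {β : C → ℝ}
    {P : Finset C} {lam : ℝ} (hN : ∀ c c', 0 ≤ N c c') (hsymm : ∀ c c', N c c' = N c' c)
    (hβ : ∀ c, 0 < β c) (hrow : ∀ c, ∑ c' ∈ {c}ᶜ, N c c' ≤ β c) (hlam : 0 < lam)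
    (hP : ∀ c ∈ P, lam ≤ β c) (hPc : ∀ c ∉ P, ∀ c' ∉ P, c ≠ c' → N c c' = 0) :
    ∑ c, ∑ c' ∈ {c}ᶜ, N c c' / (β c * β c') ≤ (Fintype.card C + #Pᶜ) / lam := by
  have hrow' (c : C) : ∑ c' ∈ {c}ᶜ, N c c' / (lam * β c) ≤ 1 / lam := by
    rw [← sum_div, div_le_div_iff₀ (mul_pos hlam (hβ c)) hlam]
    nlinarith [hrow c]
  have hterm (c c' : C) (hc : c ≠ c') : N c c' / (β c * β c') ≤
      N c c' / (lam * β c) + if c' ∈ P then 0 else N c' c / (lam * β c') := by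
    have hdiv {x y : C} (hy : y ∈ P) : N x y / (β x * β y) ≤ N x y / (lam * β x) := by
      rw [mul_comm lam]
      gcongr
      exacts [hN x y, mul_pos (hβ x) hlam, (hβ x).le, hP y hy]
    have hnonneg (x y : C) : 0 ≤ N x y / (lam * β x) :=
      div_nonneg (hN x y) (mul_pos hlam (hβ x)).le
    split_ifs with hc'
    · simpa using hdiv hc'
    by_cases hcP : c ∈ P
    · rw [hsymm c c', mul_comm (β c)]
      exact (hdiv hcP).trans (le_add_of_nonneg_left (by rw [← hsymm]; exact hnonneg c c'))
    · rw [hPc c hcP c' hc' hc, zero_div]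
      exact add_nonneg (by simp) (hnonneg c' c)
  calc ∑ c, ∑ c' ∈ {c}ᶜ, N c c' / (β c * β c')
      ≤ ∑ c, ∑ c' ∈ {c}ᶜ, (N c c' / (lam * β c) +
          if c' ∈ P then 0 else N c' c / (lam * β c')) :=
        sum_le_sum fun c _ ↦ sum_le_sum fun c' hc' ↦ hterm c c' (by simpa [eq_comm] using hc')
    _ = ∑ c, ∑ c' ∈ {c}ᶜ, N c c' / (lam * β c) +
          ∑ c' ∈ Pᶜ, ∑ c ∈ {c'}ᶜ, N c' c / (lam * β c') := by
        simp only [sum_add_distrib]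
        congr 1
        rw [sum_comm' (t' := univ) (s' := fun c' ↦ {c'}ᶜ) (by simp [eq_comm]), compl_eq_univ_sdiff,
          ← filter_notMem_eq_sdiff, sum_filter]
        refine sum_congr rfl fun c' _ ↦ ?_
        split_ifs <;> simp_all
    _ ≤ ∑ _c : C, 1 / lam + ∑ _c' ∈ Pᶜ, 1 / lam :=
        add_le_add (sum_le_sum fun c _ ↦ hrow' c) (sum_le_sum fun c' _ ↦ hrow' c')
    _ = (Fintype.card C + #Pᶜ) / lam := by
        simp only [sum_const, card_univ, nsmul_eq_mul]
        ring

variable [Fintype ι] {M : Matrix ι C ℝ} {w : ι → ℝ} {P : Finset C} {q : ℕ}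

/-- A weighted version of the design matrices of Barak, Dvir, Wigderson and Yehudayoff: every row
has `q` nonzero entries, any two distinct columns meet with total weight at most `1`, with equality
for two columns in `P`, and not at all for two columns outside `P`. -/
structure IsWeightedDesign (M : Matrix ι C ℝ) (w : ι → ℝ) (P : Finset C) (q : ℕ) : Prop where
  weight_pos (i : ι) : 0 < w i
  card_row (i : ι) : #{c | M i c ≠ 0} = q
  exists_ne_zero (c : C) : ∃ i, M i c ≠ 0
  pairWeight_le {a b : C} : a ≠ b → pairWeight M w a b ≤ 1
  pairWeight_eq {a b : C} : a ∈ P → b ∈ P → a ≠ b → pairWeight M w a b = 1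
  eq_zero_or_eq_zero {a b : C} : a ∉ P → b ∉ P → a ≠ b → ∀ i, M i a = 0 ∨ M i b = 0

namespace IsWeightedDesign

theorem card_sub_one_le_mul_sum (h : IsWeightedDesign M w P q) {c : C} (hc : c ∈ P) :
    (#P - 1 : ℝ) ≤ (q - 1) * ∑ i with M i c ≠ 0, w i := by
  classical
  have hrow {i : ι} (hi : M i c ≠ 0) : (#{c' ∈ {c}ᶜ | M i c' ≠ 0} : ℝ) = q - 1 := by
    rw [eq_sub_iff_add_eq, ← h.card_row i, ← card_erase_add_one (mem_filter.2 ⟨mem_univ c, hi⟩)]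
    push_cast
    congr 3
    ext c'
    simp
  calc (#P - 1 : ℝ) = ∑ c' ∈ P.erase c, pairWeight M w c c' := by
        rw [sum_congr rfl fun c' hc' ↦ h.pairWeight_eq hc (mem_of_mem_erase hc')
          (ne_of_mem_erase hc').symm, sum_const, card_erase_of_mem hc, nsmul_one,
          Nat.cast_pred (card_pos.2 ⟨c, hc⟩)]
    _ ≤ ∑ c' ∈ {c}ᶜ, pairWeight M w c c' := by
        refine sum_le_sum_of_subset_of_nonneg (fun c' hc' ↦ by simpa using ne_of_mem_erase hc') ?_
        exact fun c' _ _ ↦ sum_nonneg fun i _ ↦ (h.weight_pos i).le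
    _ = (q - 1) * ∑ i with M i c ≠ 0, w i := by
        simp only [pairWeight, ← filter_filter]
        rw [sum_congr rfl fun c' _ ↦ sum_filter _ _, sum_comm, mul_sum]
        refine sum_congr rfl fun i hi ↦ ?_
        rw [← sum_filter, sum_const, nsmul_eq_mul, hrow (mem_filter.1 hi).2]

theorem exists_le_sum_mul_tilt (h : IsWeightedDesign M w P q) (hq : 2 ≤ q) {ε : ℝ} (hε : 0 < ε) :
    ∃ y : C → ℝ, ∀ c ∈ P,
      (#P - 1) / (q * (q - 1)) - ε ≤ ∑ i, w i * tilt (fun c ↦ M i c ^ 2) y c := by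
  have hq0 : (2 : ℝ) ≤ q := mod_cast hq
  obtain ⟨y, hy⟩ := exists_sum_mul_le_sum_mul_tilt (A := fun i c ↦ M i c ^ 2) (w := w)
    (θ := fun i c ↦ if M i c ≠ 0 then 1 / q else 0) (fun i c ↦ sq_nonneg _)
    (fun i ↦ (h.weight_pos i).le) (fun i c ↦ by split_ifs <;> positivity)
    (fun i ↦ by
      rw [← sum_filter, sum_const, h.card_row, nsmul_eq_mul, mul_one_div_cancel (by positivity)])
    (fun i c hc ↦ pow_ne_zero 2 (ite_ne_right_iff.1 hc).1) hε
  refine ⟨y, fun c hc ↦ (sub_le_sub_right ?_ ε).trans (hy c)⟩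
  simp only [mul_ite, mul_zero, mul_one_div, ← sum_filter, ← sum_div]
  rw [mul_comm, ← div_div]
  gcongr
  rw [div_le_iff₀' (by linarith)]
  exact h.card_sub_one_le_mul_sum hc

theorem of_support_eq (h : IsWeightedDesign M w P q) {B : Matrix ι C ℝ}
    (hB : ∀ i c, B i c = 0 ↔ M i c = 0) : IsWeightedDesign B w P q := by
  have hpair (a b : C) : pairWeight B w a b = pairWeight M w a b := by
    simp only [pairWeight, ne_eq, hB]
  refine ⟨h.weight_pos, fun i ↦ ?_, fun c ↦ ?_, fun hab ↦ ?_, fun ha hb hab ↦ ?_,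
    fun ha hb hab i ↦ ?_⟩
  · simpa only [ne_eq, hB] using h.card_row i
  · simpa only [ne_eq, hB] using h.exists_ne_zero c
  · exact (hpair _ _).trans_le (h.pairWeight_le hab)
  · exact (hpair _ _).trans (h.pairWeight_eq ha hb hab)
  · simpa only [hB] using h.eq_zero_or_eq_zero ha hb hab i

theorem card_le_rank_add_div_of_sq_eq_mul [DecidableEq C] (h : IsWeightedDesign M w P q)
    {s : ι → C → ℝ} (hs : ∀ i c, 0 ≤ s i c) (hs_sum : ∀ i, ∑ c, s i c = 1)
    (hM : ∀ i c, M i c ^ 2 = w i * s i c) {lam : ℝ} (hlam : 0 < lam)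
    (hP : ∀ c ∈ P, lam ≤ ∑ i, w i * s i c) :
    (Fintype.card C : ℝ) ≤ M.rank + (Fintype.card C + #Pᶜ) / lam := by
  let N (c c' : C) : ℝ := ∑ i, w i * (s i c * s i c')
  let β (c : C) : ℝ := ∑ i, w i * s i c
  have hdiag (c : C) : (Mᵀ * M) c c = β c :=
    (mul_apply ..).trans <| sum_congr rfl fun i _ ↦ by rw [transpose_apply, ← sq, hM]
  have hβ (c : C) : 0 < β c := by
    obtain ⟨i, hi⟩ := h.exists_ne_zero c
    refine sum_pos' (fun i _ ↦ ?_) ⟨i, mem_univ i, ?_⟩ <;> rw [← hM] <;> positivity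
  have hN (c c' : C) : 0 ≤ N c c' :=
    sum_nonneg fun i _ ↦ mul_nonneg (h.weight_pos i).le (mul_nonneg (hs i c) (hs i c'))
  have hrow (c : C) : ∑ c' ∈ {c}ᶜ, N c c' ≤ β c := calc
    ∑ c' ∈ {c}ᶜ, N c c' ≤ ∑ c', N c c' :=
      sum_le_sum_of_subset_of_nonneg (subset_univ _) fun c' _ _ ↦ hN c c'
    _ = β c := by
      rw [sum_comm]
      simp only [← mul_sum, hs_sum, mul_one, β]
  have hPc (c : C) (hc : c ∉ P) (c' : C) (hc' : c' ∉ P) (hne : c ≠ c') : N c c' = 0 := by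
    refine sum_eq_zero fun i _ ↦ ?_
    have hzero {c : C} (hc : M i c = 0) : s i c = 0 := by
      simpa [hc, (h.weight_pos i).ne'] using hM i c
    obtain h0 | h0 := h.eq_zero_or_eq_zero hc hc' hne i <;> simp [hzero h0]
  have hgram {c c' : C} (hne : c ≠ c') : (Mᵀ * M) c c' ^ 2 ≤ N c c' :=
    (sq_transpose_mul_self_apply_le (fun i ↦ (h.weight_pos i).le) hs hM c c').trans
      (mul_le_of_le_one_left (hN c c') (h.pairWeight_le hne))
  have hle := card_le_rank_add_sum_sq_div (G := Mᵀ * M) (by simp [IsSymm, transpose_mul])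
    fun c ↦ (hβ c).trans_eq (hdiag c).symm
  rw [rank_transpose_mul_self] at hle
  simp only [hdiag] at hle
  have hsymm (c c' : C) : N c c' = N c' c := by simp only [N, mul_comm (s _ c)]
  refine hle.trans (add_le_add_right (le_trans ?_
    (sum_div_mul_le_of_row_sum_le hN hsymm hβ hrow hlam hP hPc)) _)
  gcongr with c _ c' hc'
  · exact (mul_pos (hβ c) (hβ c')).le
  · exact hgram (by simpa [eq_comm] using hc')

theorem card_le_rank_add_div [DecidableEq C] (h : IsWeightedDesign M w P q) (hq : q ≠ 0)
    (y : C → ℝ) {lam : ℝ} (hlam : 0 < lam)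
    (hP : ∀ c ∈ P, lam ≤ ∑ i, w i * tilt (fun c ↦ M i c ^ 2) y c) :
    (Fintype.card C : ℝ) ≤ M.rank + (Fintype.card C + #Pᶜ) / lam := by
  have hM (i : ι) : ∃ c, M i c ≠ 0 := by
    have hne := card_ne_zero.1 ((h.card_row i).trans_ne hq)
    simpa [Finset.Nonempty] using hne
  have hsum (i : ι) : ∑ c, tilt (fun c ↦ M i c ^ 2) y c = 1 := by
    obtain ⟨c, hc⟩ := hM i
    exact sum_tilt (fun c ↦ sq_nonneg _) ⟨c, pow_ne_zero 2 hc⟩ y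
  obtain ⟨B, hrank, hzero, hB⟩ := exists_rank_eq_sq_eq_mul_tilt h.weight_pos hM y
  rw [← hrank]
  exact (h.of_support_eq hzero).card_le_rank_add_div_of_sq_eq_mul
    (fun i c ↦ tilt_nonneg (fun c ↦ sq_nonneg _) y c) hsum hB hlam hP

theorem card_sub_rank_mul_le [DecidableEq C] (h : IsWeightedDesign M w P q) (hq : 2 ≤ q) :
    (Fintype.card C - M.rank : ℝ) * (#P - 1) ≤ q * (q - 1) * (Fintype.card C + #Pᶜ) := by
  have hq0 : (2 : ℝ) ≤ q := mod_cast hq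
  have hrank : (0 : ℝ) ≤ Fintype.card C - M.rank :=
    sub_nonneg.2 (mod_cast M.rank_le_card_width)
  have hlt {lam : ℝ} (hlam : lam < (#P - 1) / (q * (q - 1))) :
      (Fintype.card C - M.rank : ℝ) * lam ≤ Fintype.card C + #Pᶜ := by
    obtain hlam0 | hlam0 := le_or_gt lam 0
    · exact (mul_nonpos_of_nonneg_of_nonpos hrank hlam0).trans (by positivity)
    obtain ⟨y, hy⟩ := h.exists_le_sum_mul_tilt hq (sub_pos.2 hlam)
    rw [← le_div_iff₀ hlam0, sub_le_iff_le_add']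
    exact h.card_le_rank_add_div (by lia) y hlam0 (by simpa using hy)
  obtain hrank0 | hrank0 := hrank.eq_or_lt
  · rw [← hrank0, zero_mul]
    have : (0 : ℝ) ≤ q - 1 := by linarith
    positivity
  · rw [← div_le_iff₀' (by nlinarith), mul_div_assoc, ← le_div_iff₀' hrank0]
    exact le_of_forall_lt_imp_le_of_dense fun lam hlam ↦ (le_div_iff₀' hrank0).2 (hlt hlam)

end IsWeightedDesign

end Design

section LinearRelations

variable {K E ι C : Type*} [Field K] [AddCommGroup E] [Module K E] [Fintype C]

theorem finrank_span_add_rank_le [Finite ι] {M : Matrix ι C K} {v : C → E}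
    (hv : ∀ i, ∑ c, M i c • v c = 0) :
    finrank K (Submodule.span K (Set.range v)) + M.rank ≤ Fintype.card C := by
  rw [← Fintype.range_linearCombination K v, M.rank_eq_finrank_span_row,
    ← finrank_fintype_fun_eq_card K (η := C),
    ← (Fintype.linearCombination K v).finrank_range_add_finrank_ker]
  gcongr
  refine Submodule.finrank_mono (Submodule.span_le.2 ?_)
  rintro _ ⟨i, rfl⟩
  exact (Fintype.linearCombination_apply K v _).trans (hv i)

theorem span_pair_eq_of_mem {a b x y : E} (hxy : LinearIndependent K ![x, y])
    (hx : x ∈ Submodule.span K {a, b}) (hy : y ∈ Submodule.span K {a, b}) :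
    Submodule.span K {x, y} = Submodule.span K {a, b} := by
  classical
  have := FiniteDimensional.span_of_finite K (Set.toFinite {a, b})
  refine Submodule.eq_of_le_of_finrank_le (Submodule.span_le.2 ?_) ?_
  · rintro z (rfl | rfl) <;> assumption
  · have htwo := finrank_span_eq_card hxy
    rw [Matrix.range_cons_cons_empty, Fintype.card_fin] at htwo
    rw [htwo, ← coe_pair]
    exact (finrank_span_finset_le_card {a, b}).trans card_le_two

theorem exists_sum_smul_eq_zero_of_card_eq_three {v : C → E}
    (hv : Pairwise fun a b ↦ LinearIndependent K ![v a, v b]) {a b : C} {S : Finset C}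
    (hS : #S = 3) (hmem : ∀ c ∈ S, v c ∈ Submodule.span K {v a, v b}) :
    ∃ g : C → K, (∀ c, g c ≠ 0 ↔ c ∈ S) ∧ ∑ c, g c • v c = 0 := by
  classical
  obtain ⟨x, y, z, hxy, hxz, hyz, rfl⟩ := card_eq_three.1 hS
  have hz : v z ∈ Submodule.span K {v x, v y} := by
    rw [span_pair_eq_of_mem (hv hxy) (hmem x (by simp)) (hmem y (by simp))]
    exact hmem z (by simp)
  obtain ⟨s, t, hst⟩ := Submodule.mem_span_pair.1 hz
  have hs : s ≠ 0 := by
    rintro rfl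
    simpa using (LinearIndependent.pair_iff.1 (hv hyz) t (-1) (by simp [← hst])).2
  have ht : t ≠ 0 := by
    rintro rfl
    simpa using (LinearIndependent.pair_iff.1 (hv hxz) s (-1) (by simp [← hst])).2
  refine ⟨Pi.single x s + Pi.single y t - Pi.single z 1, fun c ↦ ?_, ?_⟩
  · simp only [Pi.sub_apply, Pi.add_apply, Pi.single_apply, mem_insert, mem_singleton]
    split_ifs <;> simp_all
  · simp [add_smul, sub_smul, sum_add_distrib, sum_sub_distrib, Pi.single_apply, hst]

end LinearRelations

section Triples

variable {C : Type*}

/-- A line and three points on it, for a family `lines` of lines given as sets of points. -/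
abbrev CollinearTriple (lines : Finset (Finset C)) : Type _ :=
  {e // e ∈ lines.sigma fun l ↦ l.powersetCard 3}

theorem card_filter_mem_powersetCard_three [DecidableEq C] {l : Finset C} {a b : C}
    (hab : a ≠ b) (ha : a ∈ l) (hb : b ∈ l) : #{S ∈ l.powersetCard 3 | a ∈ S ∧ b ∈ S} = #l - 2 := by
  have hsub : ({a, b} : Finset C) ⊆ l := by simp [insert_subset_iff, ha, hb]
  have hcard := card_filter_powersetCard_subset {a, b} l 3 hsub (by simp [card_pair hab])
  simpa [insert_subset_iff, card_pair hab] using hcard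

theorem sum_collinearTriple_inv_card_sub_two [DecidableEq C] {lines : Finset (Finset C)}
    (hcard : ∀ l ∈ lines, 3 ≤ #l) {a b : C} (hab : a ≠ b) :
    ∑ e : CollinearTriple lines with a ∈ e.1.2 ∧ b ∈ e.1.2, ((#e.1.1 : ℝ) - 2)⁻¹ =
      #{l ∈ lines | a ∈ l ∧ b ∈ l} := by
  have hline {l : Finset C} (hl : l ∈ lines) :
      ∑ S ∈ l.powersetCard 3 with a ∈ S ∧ b ∈ S, ((#l : ℝ) - 2)⁻¹ =
        if a ∈ l ∧ b ∈ l then 1 else 0 := by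
    split_ifs with h
    · have := hcard l hl
      rw [sum_const, card_filter_mem_powersetCard_three hab h.1 h.2, nsmul_eq_mul,
        Nat.cast_sub (by lia), Nat.cast_two, mul_inv_cancel₀]
      rify at this
      linarith
    · refine sum_eq_zero fun S hS ↦ absurd ?_ h
      obtain ⟨hS, haS, hbS⟩ := mem_filter.1 hS
      exact ⟨(mem_powersetCard.1 hS).1 haS, (mem_powersetCard.1 hS).1 hbS⟩
  rw [sum_filter, sum_coe_sort (lines.sigma fun l ↦ l.powersetCard 3)
    (fun e ↦ if a ∈ e.2 ∧ b ∈ e.2 then ((#e.1 : ℝ) - 2)⁻¹ else 0), sum_sigma, card_filter,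
    Nat.cast_sum]
  refine sum_congr rfl fun l hl ↦ ?_
  rw [← sum_filter, hline hl]
  split_ifs <;> simp

theorem isWeightedDesign_collinearTriple [Fintype C] [DecidableEq C]
    {lines : Finset (Finset C)} {P : Finset C} {M : Matrix (CollinearTriple lines) C ℝ}
    (hM : ∀ e c, M e c ≠ 0 ↔ c ∈ e.1.2)
    (hcard : ∀ l ∈ lines, 3 ≤ #l) (hpoint : ∀ c, ∃ l ∈ lines, c ∈ l)
    (hunique : ∀ a b, a ≠ b → #{l ∈ lines | a ∈ l ∧ b ∈ l} ≤ 1)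
    (hjoin : ∀ a ∈ P, ∀ b ∈ P, a ≠ b → ∃ l ∈ lines, a ∈ l ∧ b ∈ l)
    (hout : ∀ l ∈ lines, ∀ a ∈ l, ∀ b ∈ l, a ∉ P → b ∉ P → a = b) :
    IsWeightedDesign M (fun e ↦ ((#e.1.1 : ℝ) - 2)⁻¹) P 3 := by
  have hmem (e : CollinearTriple lines) : e.1.1 ∈ lines ∧ e.1.2 ⊆ e.1.1 ∧ #e.1.2 = 3 := by
    simpa only [mem_sigma, mem_powersetCard] using e.2
  have hpair {a b : C} (hab : a ≠ b) : pairWeight M (fun e ↦ ((#e.1.1 : ℝ) - 2)⁻¹) a b =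
      #{l ∈ lines | a ∈ l ∧ b ∈ l} := by
    rw [← sum_collinearTriple_inv_card_sub_two hcard hab, pairWeight]
    simp only [hM]
  refine ⟨fun e ↦ ?_, fun e ↦ ?_, fun c ↦ ?_, fun hab ↦ ?_, fun ha hb hab ↦ ?_,
    fun {a b} ha hb hab e ↦ ?_⟩
  · have := hcard _ (hmem e).1
    rify at this
    exact inv_pos.2 (by linarith)
  · simpa only [hM, filter_univ_mem] using (hmem e).2.2
  · obtain ⟨l, hl, hc⟩ := hpoint c
    obtain ⟨S, hcS, hSl, hS⟩ := exists_subsuperset_card_eq (singleton_subset_iff.2 hc)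
      (by simp) (hcard l hl)
    refine ⟨⟨⟨l, S⟩, mem_sigma.2 ⟨hl, mem_powersetCard.2 ⟨hSl, hS⟩⟩⟩, (hM _ c).2 ?_⟩
    exact singleton_subset_iff.1 hcS
  · rw [hpair hab]
    exact_mod_cast hunique _ _ hab
  · obtain ⟨l, hl, hmem_l⟩ := hjoin _ ha _ hb hab
    rw [hpair hab]
    exact_mod_cast (hunique _ _ hab).antisymm (card_pos.2 ⟨l, mem_filter.2 ⟨hl, hmem_l⟩⟩)
  · by_contra! h
    exact hab (hout _ (hmem e).1 a ((hmem e).2.1 ((hM e a).1 h.1)) b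
      ((hmem e).2.1 ((hM e b).1 h.2)) ha hb)

end Triples

section Projective

variable {K E C : Type*} [Field K] [AddCommGroup E] [Module K E] [Fintype C]

/-- The projective line through two members `a`, `b` of a family of vectors `v`, as the set of all
members of the family which it contains. -/
noncomputable def spanLine (K : Type*) {E C : Type*} [Field K] [AddCommGroup E] [Module K E]
    [Fintype C] (v : C → E) (a b : C) : Finset C :=
  open Classical in {c | v c ∈ Submodule.span K {v a, v b}}

/-- The projective lines joining two members of the subfamily `P` of `v`. -/
noncomputable def connectingLines (K : Type*) {E C : Type*} [Field K] [AddCommGroup E] [Module K E]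
    [Fintype C] (v : C → E) (P : Finset C) : Finset (Finset C) :=
  open Classical in P.offDiag.image fun e ↦ spanLine K v e.1 e.2

variable {v : C → E} {P : Finset C} {a b c c' : C}

theorem mem_spanLine : c ∈ spanLine K v a b ↔ v c ∈ Submodule.span K {v a, v b} := by
  simp [spanLine]

theorem left_mem_spanLine : a ∈ spanLine K v a b :=
  mem_spanLine.2 (Submodule.subset_span (by simp))

theorem right_mem_spanLine : b ∈ spanLine K v a b :=
  mem_spanLine.2 (Submodule.subset_span (by simp))

theorem spanLine_mem_connectingLines (ha : a ∈ P) (hb : b ∈ P) (hab : a ≠ b) :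
    spanLine K v a b ∈ connectingLines K v P := by
  classical
  exact mem_image.2 ⟨(a, b), mem_offDiag.2 ⟨ha, hb, hab⟩, rfl⟩

theorem forall_mem_connectingLines {p : Finset C → Prop} :
    (∀ l ∈ connectingLines K v P, p l) ↔ ∀ a ∈ P, ∀ b ∈ P, a ≠ b → p (spanLine K v a b) := by
  classical
  simp only [connectingLines, forall_mem_image, Prod.forall, mem_offDiag]
  exact ⟨fun h a ha b hb hab ↦ h a b ⟨ha, hb, hab⟩, fun h a b hab ↦ h a hab.1 b hab.2.1 hab.2.2⟩

theorem spanLine_eq_of_mem (hv : Pairwise fun a b ↦ LinearIndependent K ![v a, v b])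
    (hc : c ∈ spanLine K v a b) (hc' : c' ∈ spanLine K v a b) (hne : c ≠ c') :
    spanLine K v a b = spanLine K v c c' := by
  ext x
  rw [mem_spanLine, mem_spanLine,
    span_pair_eq_of_mem (hv hne) (mem_spanLine.1 hc) (mem_spanLine.1 hc')]

theorem card_filter_connectingLines_le_one [DecidableEq C]
    (hv : Pairwise fun a b ↦ LinearIndependent K ![v a, v b]) (hne : c ≠ c') :
    #{l ∈ connectingLines K v P | c ∈ l ∧ c' ∈ l} ≤ 1 := by
  have heq : ∀ l ∈ connectingLines K v P, c ∈ l ∧ c' ∈ l → l = spanLine K v c c' :=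
    forall_mem_connectingLines.2 fun a _ b _ _ h ↦ spanLine_eq_of_mem hv h.1 h.2 hne
  refine card_le_one.2 fun l hl l' hl' ↦ ?_
  rw [mem_filter] at hl hl'
  rw [heq l hl.1 hl.2, heq l' hl'.1 hl'.2]

theorem CollinearTriple.exists_sum_smul_eq_zero
    (hv : Pairwise fun a b ↦ LinearIndependent K ![v a, v b])
    (e : CollinearTriple (connectingLines K v P)) :
    ∃ g : C → K, (∀ c, g c ≠ 0 ↔ c ∈ e.1.2) ∧ ∑ c, g c • v c = 0 := by
  obtain ⟨⟨l, S⟩, he⟩ := e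
  obtain ⟨hl, hS⟩ := mem_sigma.1 he
  obtain ⟨hSl, hS⟩ := mem_powersetCard.1 hS
  have hspan : ∀ l ∈ connectingLines K v P, ∃ a b, l = spanLine K v a b :=
    forall_mem_connectingLines.2 fun a _ b _ _ ↦ ⟨a, b, rfl⟩
  obtain ⟨a, b, rfl⟩ := hspan l hl
  exact exists_sum_smul_eq_zero_of_card_eq_three hv hS fun c hc ↦ mem_spanLine.1 (hSl hc)

/-- The design matrix argument of Dvir, Saraf and Wigderson: the relations between three members of
a common line form a weighted design whose kernel has dimension at least the rank of `v`. -/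
theorem finrank_span_mul_card_sub_one_le [DecidableEq C] [Module ℝ E]
    (hv : Pairwise fun a b ↦ LinearIndependent ℝ ![v a, v b])
    (hcard : ∀ l ∈ connectingLines ℝ v P, 3 ≤ #l)
    (hpoint : ∀ c, ∃ l ∈ connectingLines ℝ v P, c ∈ l)
    (hout : ∀ l ∈ connectingLines ℝ v P, ∀ a ∈ l, ∀ b ∈ l, a ∉ P → b ∉ P → a = b) :
    (finrank ℝ (Submodule.span ℝ (Set.range v)) : ℝ) * (#P - 1) ≤
      6 * (Fintype.card C + #Pᶜ) := by
  obtain hP | hP := lt_or_ge #P 1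
  · simp only [Nat.lt_one_iff.1 hP, CharP.cast_eq_zero]
    nlinarith
  choose M hM hMv using CollinearTriple.exists_sum_smul_eq_zero (P := P) hv
  have hdesign : IsWeightedDesign M _ P 3 := isWeightedDesign_collinearTriple hM hcard hpoint
    (fun a b ↦ card_filter_connectingLines_le_one hv) (fun a ha b hb hab ↦
      ⟨_, spanLine_mem_connectingLines ha hb hab, left_mem_spanLine, right_mem_spanLine⟩) hout
  have hrank := finrank_span_add_rank_le hMv
  rify at hrank hP
  calc (finrank ℝ (Submodule.span ℝ (Set.range v)) : ℝ) * (#P - 1)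
      ≤ (Fintype.card C - Matrix.rank M) * (#P - 1) :=
        mul_le_mul_of_nonneg_right (le_sub_iff_add_le.2 hrank) (sub_nonneg.2 hP)
    _ ≤ (3 : ℕ) * ((3 : ℕ) - 1) * (Fintype.card C + #Pᶜ) :=
        hdesign.card_sub_rank_mul_le (by norm_num)
    _ = 6 * (Fintype.card C + #Pᶜ) := by norm_num

end Projective

section Counting

theorem sq_le_four_mul_sum_range_one_add_min (r : ℕ) :
    r ^ 2 ≤ 4 * ∑ i ∈ range r, (1 + min i (r - 1 - i)) := by
  induction r using Nat.twoStepInduction with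
  | zero => simp
  | one => simp
  | more r ih _ =>
    have hshift : ∑ i ∈ range r, (1 + min (i + 1) (r + 2 - 1 - (i + 1))) =
        ∑ i ∈ range r, (1 + min i (r - 1 - i)) + r := by
      calc _ = ∑ i ∈ range r, (1 + min i (r - 1 - i) + 1) :=
            sum_congr rfl fun i hi ↦ by rw [mem_range] at hi; lia
        _ = _ := by rw [sum_add_distrib]; simp
    rw [sum_range_succ, sum_range_succ', hshift]
    simp only [Nat.zero_le, min_eq_left, tsub_self, Nat.add_one_sub_one, Nat.min_zero]
    nlinarith

theorem sum_card_filter_lt {α M : Type*} [LinearOrder α] [AddCommMonoid M] (s : Finset α)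
    (h : ℕ → M) : ∑ x ∈ s, h #{y ∈ s | y < x} = ∑ i ∈ range #s, h i := by
  induction s using induction_on_max with
  | empty => simp
  | insert a s hmax ih =>
    have ha : a ∉ s := fun ha ↦ (hmax a ha).false
    rw [sum_insert ha, card_insert_of_notMem ha, sum_range_succ, ← ih, add_comm, filter_insert,
      if_neg (lt_irrefl a), filter_true_of_mem hmax]
    congr 1
    refine sum_congr rfl fun x hx ↦ ?_
    rw [filter_insert, if_neg (hmax x hx).not_gt]

theorem card_filter_lt_add_card_filter_gt {α : Type*} [LinearOrder α] {s : Finset α} {x : α}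
    (hx : x ∈ s) : #{y ∈ s | y < x} + #{y ∈ s | x < y} + 1 = #s := by
  rw [← card_union_of_disjoint, ← filter_or, ← card_erase_add_one hx]
  · congr 2
    ext y
    simp only [mem_filter, mem_erase, and_comm, lt_or_lt_iff_ne]
  · exact disjoint_filter.2 fun y _ hlt hgt ↦ lt_asymm hlt hgt

theorem sq_card_le_four_mul_sum_one_add_min {α : Type*} [LinearOrder α] (s : Finset α) :
    #s ^ 2 ≤ 4 * ∑ x ∈ s, (1 + min #{y ∈ s | y < x} #{y ∈ s | x < y}) := by
  have hgt {x : α} (hx : x ∈ s) : #{y ∈ s | x < y} = #s - 1 - #{y ∈ s | y < x} := by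
    have := card_filter_lt_add_card_filter_gt hx
    lia
  rw [sum_congr rfl fun x hx ↦ by rw [hgt hx],
    sum_card_filter_lt s fun i ↦ 1 + min i (#s - 1 - i)]
  exact sq_le_four_mul_sum_range_one_add_min #s

theorem sum_one_add_le_card_of_le_card_gap {β : Type*} [LinearOrder β] {S D : Finset β}
    (hSD : S ⊆ D) {h : β → ℕ} {m : β} (hm : ∀ σ ∈ S, σ < m)
    (hgap : ∀ σ ∈ S, ∀ τ ∈ insert m S, σ < τ → h σ ≤ #{δ ∈ D | σ < δ ∧ δ < τ}) :
    ∑ σ ∈ S, (1 + h σ) ≤ #{δ ∈ D | δ < m ∧ ∃ σ ∈ S, σ ≤ δ} := by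
  induction S using induction_on_max generalizing m with
  | empty => simp
  | insert a S hmax ih =>
    rw [insert_subset_iff] at hSD
    have ha : a ∉ S := fun ha ↦ (hmax a ha).false
    have ham : a < m := hm a (mem_insert_self a S)
    have hS := ih hSD.2 hmax fun σ hσ τ hτ ↦
      hgap σ (mem_insert_of_mem hσ) τ (mem_insert_of_mem hτ)
    have hlast := hgap a (mem_insert_self a S) m (mem_insert_self _ _) ham
    rw [sum_insert ha, add_comm 1]
    calc h a + 1 + ∑ σ ∈ S, (1 + h σ)
        ≤ #(insert a {δ ∈ D | a < δ ∧ δ < m}) + #{δ ∈ D | δ < a ∧ ∃ σ ∈ S, σ ≤ δ} := by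
          rw [card_insert_of_notMem (by simp)]
          lia
      _ = #(insert a {δ ∈ D | a < δ ∧ δ < m} ∪ {δ ∈ D | δ < a ∧ ∃ σ ∈ S, σ ≤ δ}) := by
          refine (card_union_of_disjoint (disjoint_left.2 fun δ hδ hδ' ↦ ?_)).symm
          grind
      _ ≤ #{δ ∈ D | δ < m ∧ ∃ σ ∈ insert a S, σ ≤ δ} := by
          refine card_le_card fun δ hδ ↦ ?_
          grind

/-- Cut the cyclic order on `D` at the points of `S`: the arcs are disjoint, and each `h σ` is
at most the number of points on the arc following `σ`. -/
theorem sum_one_add_le_card_of_le_card_arc {β : Type*} [LinearOrder β] {S D : Finset β}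
    (hSD : S ⊆ D) (hS : 1 < #S) {h : β → ℕ}
    (hin : ∀ σ ∈ S, ∀ τ ∈ S, σ < τ → h σ ≤ #{δ ∈ D | σ < δ ∧ δ < τ})
    (hout : ∀ σ ∈ S, ∀ τ ∈ S, σ < τ → h τ ≤ #{δ ∈ D | δ < σ ∨ τ < δ}) :
    ∑ σ ∈ S, (1 + h σ) ≤ #D := by
  have hne : S.Nonempty := card_pos.1 (zero_lt_one.trans hS)
  set b := S.min' hne
  set m := S.max' hne
  have hb : b ∈ S := S.min'_mem hne
  have hm : m ∈ S := S.max'_mem hne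
  have hbefore := sum_one_add_le_card_of_le_card_gap ((erase_subset m S).trans hSD)
    (fun σ hσ ↦ S.lt_max'_of_mem_erase_max' hne hσ) fun σ hσ τ hτ ↦
      hin σ (mem_of_mem_erase hσ) τ (insert_erase hm ▸ hτ)
  have hbm : b < m := S.min'_lt_max'_of_card hS
  have hlast := hout b hb m hm hbm
  rw [← add_sum_erase S _ hm, add_comm 1]
  calc h m + 1 + ∑ σ ∈ S.erase m, (1 + h σ)
      ≤ #(insert m {δ ∈ D | δ < b ∨ m < δ}) + #{δ ∈ D | δ < m ∧ ∃ σ ∈ S.erase m, σ ≤ δ} := by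
        rw [card_insert_of_notMem (by simp [hbm.not_gt])]
        lia
    _ = #(insert m {δ ∈ D | δ < b ∨ m < δ} ∪ {δ ∈ D | δ < m ∧ ∃ σ ∈ S.erase m, σ ≤ δ}) := by
        refine (card_union_of_disjoint (disjoint_left.2 fun δ hδ hδ' ↦ ?_)).symm
        have := fun σ ↦ S.min'_le σ
        grind
    _ ≤ #D := by
        refine card_le_card fun δ hδ ↦ ?_
        grind

end Counting

section Slope

variable {K : Type*} [Field K] {f : K → K} {x y a σ : K}

theorem slope_eq_iff_sub_mul_eq (hxy : y ≠ x) : slope f x y = σ ↔ f y - σ * y = f x - σ * x := by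
  rw [slope_def_field, div_eq_iff (sub_ne_zero.2 hxy)]
  constructor <;> intro h <;> linear_combination h

theorem slope_eq_add_mul (hya : y ≠ a) :
    slope f y a = slope f x y + (a - x) / (a - y) * (slope f x a - slope f x y) := by
  rw [← lineMap_slope_slope_sub_div_sub f y x a hya, AffineMap.lineMap_apply, slope_comm f y x,
    vsub_eq_sub, vadd_eq_add, smul_eq_mul, add_comm]

theorem injOn_slope (hyx : y ≠ x) (hσ : slope f x y ≠ σ) :
    Set.InjOn (slope f y) {a | slope f x a = σ} := by
  intro a (ha : slope f x a = σ) b (hb : slope f x b = σ) hab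
  have hya : y ≠ a := by rintro rfl; exact hσ ha
  have hyb : y ≠ b := by rintro rfl; exact hσ hb
  rw [slope_eq_add_mul (x := x) hya, slope_eq_add_mul (x := x) hyb, ha, hb] at hab
  have hdiv := mul_right_cancel₀ (sub_ne_zero.2 hσ.symm) (add_left_cancel hab)
  rw [div_eq_div_iff (sub_ne_zero.2 hya.symm) (sub_ne_zero.2 hyb.symm)] at hdiv
  refine mul_left_cancel₀ (sub_ne_zero.2 hyx) ?_
  linear_combination -hdiv

variable [LinearOrder K] [IsStrictOrderedRing K]

theorem slope_between (hx : a < x ∧ x < y ∨ y < x ∧ x < a) (hlt : slope f x a < slope f x y) :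
    slope f x a < slope f y a ∧ slope f y a < slope f x y := by
  have hya : y ≠ a := by rintro rfl; exact hlt.false
  have hpos : 0 < (a - x) / (a - y) := by
    obtain h | h := hx
    · exact div_pos_of_neg_of_neg (by linarith) (by linarith)
    · exact div_pos (by linarith) (by linarith)
  have hlt_one : (a - x) / (a - y) < 1 := by
    obtain h | h := hx
    · exact (div_lt_one_of_neg (by linarith)).2 (by linarith)
    · exact (div_lt_one (by linarith)).2 (by linarith)
  rw [slope_eq_add_mul (x := x) hya]
  constructor <;> nlinarith

theorem slope_lt_or_lt_slope (hx : a < x ∧ y < x ∨ x < a ∧ x < y)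
    (hlt : slope f x y < slope f x a) :
    slope f y a < slope f x y ∨ slope f x a < slope f y a := by
  have hya : y ≠ a := by rintro rfl; exact hlt.false
  have hratio : (a - x) / (a - y) < 0 ∨ 1 < (a - x) / (a - y) := by
    obtain ⟨hax, hyx⟩ | ⟨hax, hyx⟩ := hx <;> obtain h | h := hya.lt_or_gt
    · exact .inl (div_neg_of_neg_of_pos (by linarith) (by linarith))
    · exact .inr ((one_lt_div_of_neg (by linarith)).2 (by linarith))
    · exact .inr ((one_lt_div (by linarith)).2 (by linarith))
    · exact .inl (div_neg_of_pos_of_neg (by linarith) (by linarith))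
  rw [slope_eq_add_mul (x := x) hya]
  exact hratio.imp (fun h ↦ by nlinarith) (fun h ↦ by nlinarith)

end Slope

section Slopes

variable {K : Type*} [Field K] [LinearOrder K] {s : Finset K} {f : K → K} {x y σ τ : K}

/-- The slopes of the lines joining two points of the graph of `f` over `s`. -/
def slopes (s : Finset K) (f : K → K) : Finset K :=
  s.offDiag.image fun e ↦ slope f e.1 e.2

/-- The slopes of the lines joining the point of the graph of `f` over `x` to the other points of
the graph over `s`. -/
def slopesAt (s : Finset K) (f : K → K) (x : K) : Finset K :=
  (s.erase x).image (slope f x)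

/-- On the line of slope `σ` through the point over `x`, count the points of the graph of `f` over
`s` to the left and to the right of `x`, and take the smaller of the two numbers. -/
def minSide (s : Finset K) (f : K → K) (x σ : K) : ℕ :=
  min #{a ∈ s | slope f x a = σ ∧ a < x} #{a ∈ s | slope f x a = σ ∧ x < a}

theorem mem_slopesAt : σ ∈ slopesAt s f x ↔ ∃ y ∈ s, y ≠ x ∧ slope f x y = σ := by
  simp [slopesAt, and_assoc, and_left_comm]

theorem slope_mem_slopes (hx : x ∈ s) (hy : y ∈ s) (hxy : x ≠ y) : slope f x y ∈ slopes s f :=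
  mem_image.2 ⟨(x, y), mem_offDiag.2 ⟨hx, hy, hxy⟩, rfl⟩

theorem slopesAt_subset_slopes (hx : x ∈ s) : slopesAt s f x ⊆ slopes s f := by
  intro σ hσ
  obtain ⟨y, hy, hyx, rfl⟩ := mem_slopesAt.1 hσ
  exact slope_mem_slopes hx hy hyx.symm

/-- Joining the point over `y` to distinct points of a line not through it gives distinct slopes. -/
theorem card_le_card_filter_slopes {A : Finset K} {r : K → Prop} [DecidablePred r] (hy : y ∈ s)
    (hyx : y ≠ x) (hA : ∀ a ∈ A, a ∈ s ∧ slope f x a = σ) (hσ : slope f x y ≠ σ)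
    (hr : ∀ a ∈ A, r (slope f y a)) : #A ≤ #{δ ∈ slopes s f | r δ} := by
  refine card_le_card_of_injOn (slope f y) (fun a ha ↦ mem_filter.2 ⟨?_, hr a ha⟩)
    ((injOn_slope hyx hσ).mono fun a ha ↦ (hA a ha).2)
  refine slope_mem_slopes hy (hA a ha).1 ?_
  rintro rfl
  exact hσ (hA y ha).2

theorem sum_card_filter_slope_le (s : Finset K) (f : K → K) (σ : K) :
    ∑ x ∈ s with σ ∈ slopesAt s f x, #{a ∈ s.erase x | slope f x a = σ} ≤
      4 * ∑ x ∈ s with σ ∈ slopesAt s f x, (1 + minSide s f x σ) := by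
  set t : Finset K := {x ∈ s | σ ∈ slopesAt s f x}
  set c : K → K := fun x ↦ f x - σ * x
  have hline {x a : K} (hx : x ∈ s) (hax : a ≠ x) :
      a ∈ s ∧ slope f x a = σ ↔ a ∈ t ∧ c a = c x := by
    simp only [t, c, mem_filter, mem_slopesAt, ← slope_eq_iff_sub_mul_eq hax]
    refine ⟨fun h ↦ ⟨⟨h.1, x, hx, hax.symm, slope_comm f x a ▸ h.2⟩, h.2⟩, fun h ↦ ⟨h.1.1, h.2⟩⟩
  have hmaps : ∀ x ∈ t, c x ∈ t.image c := fun x ↦ mem_image_of_mem c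
  rw [← sum_fiberwise_of_maps_to hmaps, ← sum_fiberwise_of_maps_to hmaps, mul_sum]
  refine sum_le_sum fun γ _ ↦ ?_
  set l : Finset K := {x ∈ t | c x = γ}
  have hl {x a : K} (hx : x ∈ l) (hax : a ≠ x) : a ∈ s ∧ slope f x a = σ ↔ a ∈ l := by
    obtain ⟨hx, hxγ⟩ := mem_filter.1 hx
    rw [hline (mem_filter.1 hx).1 hax, hxγ, mem_filter (s := t)]
  calc ∑ x ∈ l, #{a ∈ s.erase x | slope f x a = σ} ≤ ∑ _x ∈ l, #l := by
        refine sum_le_sum fun x hx ↦ card_le_card fun a ha ↦ ?_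
        obtain ⟨ha, haσ⟩ := mem_filter.1 ha
        exact (hl hx (ne_of_mem_erase ha)).1 ⟨mem_of_mem_erase ha, haσ⟩
    _ = #l ^ 2 := by rw [sum_const, smul_eq_mul, sq]
    _ ≤ 4 * ∑ x ∈ l, (1 + min #{y ∈ l | y < x} #{y ∈ l | x < y}) :=
        sq_card_le_four_mul_sum_one_add_min l
    _ = 4 * ∑ x ∈ l, (1 + minSide s f x σ) := by
        refine congrArg _ (sum_congr rfl fun x hx ↦ ?_)
        rw [minSide]
        congr 3 <;> ext a <;> simp only [mem_filter, ← and_assoc]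
        · exact and_congr_left fun hax ↦ (hl hx hax.ne).symm
        · exact and_congr_left fun hax ↦ (hl hx hax.ne').symm

variable [IsStrictOrderedRing K]

theorem minSide_le_card_filter_between (hτ : τ ∈ slopesAt s f x) (hlt : σ < τ) :
    minSide s f x σ ≤ #{δ ∈ slopes s f | σ < δ ∧ δ < τ} := by
  obtain ⟨y, hy, hyx, rfl⟩ := mem_slopesAt.1 hτ
  obtain h | h := hyx.lt_or_gt
  · refine (min_le_right _ _).trans (card_le_card_filter_slopes (x := x) (σ := σ) hy hyx
      (fun a ha ↦ ?_) hlt.ne' fun a ha ↦ ?_) <;> obtain ⟨has, rfl, hax⟩ := mem_filter.1 ha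
    · exact ⟨has, rfl⟩
    · exact slope_between (.inr ⟨h, hax⟩) hlt
  · refine (min_le_left _ _).trans (card_le_card_filter_slopes (x := x) (σ := σ) hy hyx
      (fun a ha ↦ ?_) hlt.ne' fun a ha ↦ ?_) <;> obtain ⟨has, rfl, hax⟩ := mem_filter.1 ha
    · exact ⟨has, rfl⟩
    · exact slope_between (.inl ⟨hax, h⟩) hlt

theorem minSide_le_card_filter_outside (hσ : σ ∈ slopesAt s f x) (hlt : σ < τ) :
    minSide s f x τ ≤ #{δ ∈ slopes s f | δ < σ ∨ τ < δ} := by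
  obtain ⟨y, hy, hyx, rfl⟩ := mem_slopesAt.1 hσ
  obtain h | h := hyx.lt_or_gt
  · refine (min_le_left _ _).trans (card_le_card_filter_slopes (x := x) (σ := τ) hy hyx
      (fun a ha ↦ ?_) hlt.ne fun a ha ↦ ?_) <;> obtain ⟨has, rfl, hax⟩ := mem_filter.1 ha
    · exact ⟨has, rfl⟩
    · exact slope_lt_or_lt_slope (.inl ⟨hax, h⟩) hlt
  · refine (min_le_right _ _).trans (card_le_card_filter_slopes (x := x) (σ := τ) hy hyx
      (fun a ha ↦ ?_) hlt.ne fun a ha ↦ ?_) <;> obtain ⟨has, rfl, hax⟩ := mem_filter.1 ha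
    · exact ⟨has, rfl⟩
    · exact slope_lt_or_lt_slope (.inr ⟨hax, h⟩) hlt

theorem sum_one_add_minSide_le_card_slopes (hx : x ∈ s) (hcard : 1 < #(slopesAt s f x)) :
    ∑ σ ∈ slopesAt s f x, (1 + minSide s f x σ) ≤ #(slopes s f) :=
  sum_one_add_le_card_of_le_card_arc (slopesAt_subset_slopes hx) hcard
    (fun _ _ _ hτ ↦ minSide_le_card_filter_between hτ)
    (fun _ hσ _ _ ↦ minSide_le_card_filter_outside hσ)

/-- Group the ordered pairs of points by the line through them: a line with `r` points accounts for
`r * (r - 1)` pairs, which is at most four times the sum of `1 + minSide` over its points. -/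
theorem card_sub_one_le_four_mul_card_slopes (hs : ∀ x ∈ s, 1 < #(slopesAt s f x)) :
    #s - 1 ≤ 4 * #(slopes s f) := by
  obtain rfl | hne := s.eq_empty_or_nonempty
  · simp
  have hswap (g : K → K → ℕ) : ∑ x ∈ s, ∑ σ ∈ slopesAt s f x, g x σ =
      ∑ σ ∈ slopes s f, ∑ x ∈ s with σ ∈ slopesAt s f x, g x σ := by
    refine sum_comm' fun x σ ↦ ?_
    rw [mem_filter]
    exact ⟨fun h ↦ ⟨h, slopesAt_subset_slopes h.1 h.2⟩, fun h ↦ h.1⟩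
  refine Nat.le_of_mul_le_mul_left ?_ (card_pos.2 hne)
  calc #s * (#s - 1) = ∑ x ∈ s, ∑ σ ∈ slopesAt s f x, #{a ∈ s.erase x | slope f x a = σ} := by
        rw [← smul_eq_mul, ← sum_const]
        refine sum_congr rfl fun x hx ↦ ?_
        rw [← card_erase_of_mem hx, card_eq_sum_card_image (slope f x), slopesAt]
    _ ≤ ∑ σ ∈ slopes s f, 4 * ∑ x ∈ s with σ ∈ slopesAt s f x, (1 + minSide s f x σ) := by
        rw [hswap]
        exact sum_le_sum fun σ _ ↦ sum_card_filter_slope_le s f σ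
    _ = 4 * ∑ x ∈ s, ∑ σ ∈ slopesAt s f x, (1 + minSide s f x σ) := by rw [hswap, mul_sum]
    _ ≤ 4 * ∑ _x ∈ s, #(slopes s f) :=
        Nat.mul_le_mul_left 4 (sum_le_sum fun _ hx ↦
          sum_one_add_minSide_le_card_slopes hx (hs _ hx))
    _ = #s * (4 * #(slopes s f)) := by rw [sum_const, smul_eq_mul, mul_left_comm]

end Slopes

section Directions

variable {K V α : Type*} [Field K] [AddCommGroup V] [Module K V] {p : α → V}

/-- The directions of the lines joining two points of the family `p`. -/
noncomputable def directions (K : Type*) {V α : Type*} [Field K] [AddCommGroup V] [Module K V]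
    [Fintype α] (p : α → V) : Finset (Submodule K V) :=
  open Classical in univ.offDiag.image fun e ↦ Submodule.span K {p e.1 - p e.2}

theorem mem_directions [Fintype α] {D : Submodule K V} :
    D ∈ directions K p ↔ ∃ x y, x ≠ y ∧ Submodule.span K {p x - p y} = D := by
  simp [directions]

theorem card_directions_le [Fintype α] {ι : Type*} {u : ι → V} {J : Finset ι}
    (hp : Function.Injective p)
    (hu : ∀ x y, x ≠ y → ∃ i ∈ J, p x - p y ∈ Submodule.span K {u i}) :
    #(directions K p) ≤ #J := by
  classical
  have hsub : directions K p ⊆ J.image fun i ↦ Submodule.span K {u i} := by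
    intro D hD
    obtain ⟨x, y, hxy, rfl⟩ := mem_directions.1 hD
    obtain ⟨i, hi, hmem⟩ := hu x y hxy
    obtain ⟨c, hc⟩ := Submodule.mem_span_singleton.1 hmem
    have hc0 : c ≠ 0 := by
      rintro rfl
      exact hxy (hp (sub_eq_zero.1 (by rw [← hc, zero_smul])))
    refine mem_image.2 ⟨i, hi, ?_⟩
    rw [← hc, Submodule.span_singleton_smul_eq hc0.isUnit]
  exact (card_le_card hsub).trans card_image_le

theorem exists_sub_notMem_span_singleton [Finite α] (h : 2 ≤ finrank K (vectorSpan K (Set.range p)))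
    (x : α) : ∃ y z, p y ≠ p x ∧ p z - p x ∉ Submodule.span K {p y - p x} := by
  by_contra! hcon
  have hline (w : V) (hw : ∀ z, p z - p x ∈ Submodule.span K {w}) : False := by
    have hle : vectorSpan K (Set.range p) ≤ Submodule.span K {w} := by
      rw [vectorSpan_range_eq_span_range_vsub_right K p x, Submodule.span_le]
      exact Set.range_subset_iff.2 hw
    have := (Submodule.finrank_mono hle).trans (finrank_span_le_card {w})
    rw [Set.toFinset_singleton, card_singleton] at this
    lia
  by_cases hconst : ∃ y, p y ≠ p x
  · obtain ⟨y, hy⟩ := hconst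
    exact hline _ fun z ↦ hcon y z hy
  · push Not at hconst
    exact hline 0 fun z ↦ by simp [hconst z]

theorem exists_dual_separating [CharZero K] [Finite α] (hp : Function.Injective p) :
    ∃ φ ψ : Dual K V, Function.Injective (φ ∘ p) ∧ ∀ x y z, p y ≠ p x →
      p z - p x ∉ Submodule.span K {p y - p x} →
        ψ (p z - p x) / φ (p z - p x) ≠ ψ (p y - p x) / φ (p y - p x) := by
  obtain ⟨φ, hφ⟩ := Module.exists_dual_forall_apply_ne_zero (K := K)
    (fun e : {e : α × α // e.1 ≠ e.2} ↦ p e.1.1 - p e.1.2) fun e ↦ sub_ne_zero.2 (hp.ne e.2)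
  replace hφ {x y : α} (h : p x ≠ p y) : φ (p x - p y) ≠ 0 := hφ ⟨(x, y), ne_of_apply_ne p h⟩
  let w (e : α × α × α) : V :=
    φ (p e.2.1 - p e.1) • (p e.2.2 - p e.1) - φ (p e.2.2 - p e.1) • (p e.2.1 - p e.1)
  obtain ⟨ψ, hψ⟩ := Module.exists_dual_forall_apply_ne_zero (K := K)
    (fun e : {e // w e ≠ 0} ↦ w e) fun e ↦ e.2
  refine ⟨φ, ψ, fun x y hxy ↦ ?_, fun x y z hy hz hslope ↦ ?_⟩
  · by_contra hne
    exact hφ (hp.ne hne) (by rw [map_sub, sub_eq_zero]; exact hxy)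
  · have hzx : p z ≠ p x := fun h ↦ hz (by simp [h])
    have hw : w (x, y, z) ≠ 0 := fun h ↦ hz ((Submodule.smul_mem_iff _ (hφ hy)).1
      (sub_eq_zero.1 h ▸ Submodule.smul_mem _ _ (Submodule.mem_span_singleton_self _)))
    rw [div_eq_div_iff (hφ hzx) (hφ hy)] at hslope
    refine hψ ⟨_, hw⟩ ?_
    simp only [w, map_sub, map_smul, smul_eq_mul] at hslope ⊢
    linear_combination hslope

theorem card_sub_one_le_four_mul_card_directions [LinearOrder K] [IsStrictOrderedRing K]
    [Fintype α] (hp : Function.Injective p) (h : 2 ≤ finrank K (vectorSpan K (Set.range p))) :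
    Fintype.card α - 1 ≤ 4 * #(directions K p) := by
  obtain ⟨φ, ψ, hφ, hψ⟩ := exists_dual_separating (K := K) hp
  obtain ⟨ratio, hratio⟩ : ∃ ratio : Submodule K V → K,
      ∀ v, ψ v / φ v = ratio (Submodule.span K {v}) := by
    have hfactors : (fun v ↦ ψ v / φ v).FactorsThrough fun v ↦ Submodule.span K {v} := by
      intro v w hvw
      obtain ⟨c, rfl⟩ := Submodule.span_singleton_eq_span_singleton.1 hvw
      simp [Units.smul_def, mul_div_mul_left]
    obtain ⟨ratio, hratio⟩ := (Function.factorsThrough_iff _).1 hfactors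
    exact ⟨ratio, congr_fun hratio⟩
  let s : Finset K := univ.image (φ ∘ p)
  let f : K → K := Function.extend (φ ∘ p) (ψ ∘ p) 0
  have hslope (x y : α) :
      slope f (φ (p x)) (φ (p y)) = ψ (p y - p x) / φ (p y - p x) := by
    have hf (z : α) : f (φ (p z)) = ψ (p z) := hφ.extend_apply _ _ z
    rw [slope_def_field, hf, hf, map_sub, map_sub]
  have hmem (x : α) : φ (p x) ∈ s := mem_image_of_mem (φ ∘ p) (mem_univ x)
  have hs : ∀ a ∈ s, 1 < #(slopesAt s f a) := by
    refine forall_mem_image.2 fun x _ ↦ ?_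
    obtain ⟨y, z, hy, hz⟩ := exists_sub_notMem_span_singleton h x
    have hzx : p z ≠ p x := fun hzx ↦ hz (by simp [hzx])
    refine one_lt_card.2 ⟨_, mem_slopesAt.2 ⟨φ (p z), hmem z, ?_, hslope x z⟩, _,
      mem_slopesAt.2 ⟨φ (p y), hmem y, ?_, hslope x y⟩, hψ x y z hy hz⟩
    · exact hφ.ne (ne_of_apply_ne p hzx)
    · exact hφ.ne (ne_of_apply_ne p hy)
  have hle : slopes s f ⊆ (directions K p).image ratio := by
    intro σ hσ
    simp only [slopes, s, mem_image, mem_offDiag, Prod.exists, mem_univ, true_and] at hσ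
    obtain ⟨_, _, ⟨⟨x, rfl⟩, ⟨y, rfl⟩, hxy⟩, rfl⟩ := hσ
    refine mem_image.2 ⟨_, mem_directions.2 ⟨y, x, fun h ↦ hxy (h ▸ rfl), rfl⟩, ?_⟩
    rw [← hratio, ← hslope, Function.comp_apply, Function.comp_apply]
  calc Fintype.card α - 1 = #s - 1 := by rw [card_image_of_injective _ hφ, card_univ]
    _ ≤ 4 * #(slopes s f) := card_sub_one_le_four_mul_card_slopes hs
    _ ≤ 4 * #(directions K p) := Nat.mul_le_mul_left 4 ((card_le_card hle).trans card_image_le)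

end Directions

section ProjectiveClosure

variable {K V α : Type*} [Field K] [AddCommGroup V] [Module K V] [Fintype α] {p : α → V}
  {x y : α} {D : {D // D ∈ directions K p}}

theorem exists_span_singleton_eq_direction (D : {D // D ∈ directions K p}) :
    ∃ w, Submodule.span K {w} = D.1 :=
  have ⟨_, _, _, hD⟩ := mem_directions.1 D.2
  ⟨_, hD⟩

/-- Homogeneous coordinates of the points of the family `p`, together with those of the points at
infinity in which the lines joining them meet the hyperplane at infinity. -/
noncomputable def projectiveClosure (K : Type*) {V α : Type*} [Field K] [AddCommGroup V]
    [Module K V] [Fintype α] (p : α → V) : α ⊕ {D // D ∈ directions K p} → K × V :=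
  Sum.elim (fun x ↦ (1, p x)) fun D ↦ (0, (exists_span_singleton_eq_direction D).choose)

theorem exists_projectiveClosure_inr_eq (hp : Function.Injective p)
    (D : {D // D ∈ directions K p}) :
    ∃ w ≠ 0, Submodule.span K {w} = D.1 ∧ projectiveClosure K p (.inr D) = (0, w) := by
  refine ⟨_, fun hw ↦ ?_, (exists_span_singleton_eq_direction D).choose_spec, rfl⟩
  obtain ⟨x, y, hxy, hD⟩ := mem_directions.1 D.2
  have hbot := (exists_span_singleton_eq_direction D).choose_spec
  rw [hw, Submodule.span_zero_singleton, ← hD, eq_comm, Submodule.span_singleton_eq_bot] at hbot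
  exact hxy (hp (sub_eq_zero.1 hbot))

theorem pairwise_linearIndependent_projectiveClosure (hp : Function.Injective p) :
    Pairwise fun a b ↦ LinearIndependent K ![projectiveClosure K p a, projectiveClosure K p b] := by
  have hinl_inr (x : α) (D : {D // D ∈ directions K p}) : LinearIndependent K
      ![projectiveClosure K p (.inl x), projectiveClosure K p (.inr D)] := by
    obtain ⟨w, hw, -, hD⟩ := exists_projectiveClosure_inr_eq hp D
    refine LinearIndependent.pair_iff.2 fun s t hst ↦ ?_
    have hs : s = 0 := by simpa [projectiveClosure] using congrArg Prod.fst hst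
    simpa [hs, hD, hw] using hst
  rintro (x | D) (y | D') hne
  · refine LinearIndependent.pair_iff.2 fun s t hst ↦ ?_
    obtain ⟨hone, hV⟩ : s + t = 0 ∧ s • p x + t • p y = 0 := by
      simpa [projectiveClosure] using hst
    obtain rfl := eq_neg_of_add_eq_zero_right hone
    rw [neg_smul, ← sub_eq_add_neg, ← smul_sub, smul_eq_zero, sub_eq_zero] at hV
    have hs := hV.resolve_right (hp.ne fun h ↦ hne (h ▸ rfl))
    simp [hs]
  · exact hinl_inr x D'
  · exact LinearIndependent.pair_symm_iff.1 (hinl_inr y D)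
  · obtain ⟨w, hw, hwD, hD⟩ := exists_projectiveClosure_inr_eq hp D
    obtain ⟨w', hw', hwD', hD'⟩ := exists_projectiveClosure_inr_eq hp D'
    rw [hD, hD', LinearIndependent.pair_iff' (by simpa using hw)]
    rintro a ha
    obtain rfl : a • w = w' := congrArg Prod.snd ha
    have ha0 : a ≠ 0 := fun h ↦ hw' (by rw [h, zero_smul])
    refine hne (congrArg _ (Subtype.ext ?_))
    rw [← hwD, ← hwD', Submodule.span_singleton_smul_eq ha0.isUnit]

theorem inr_mem_spanLine_iff (hp : Function.Injective p) :
    .inr D ∈ spanLine K (projectiveClosure K p) (.inl x) (.inl y) ↔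
      D.1 = Submodule.span K {p x - p y} := by
  obtain ⟨w, hw, hwD, hD⟩ := exists_projectiveClosure_inr_eq hp D
  rw [mem_spanLine, Submodule.mem_span_pair, hD, ← hwD]
  constructor
  · rintro ⟨s, t, hst⟩
    obtain ⟨hone, rfl⟩ : s + t = 0 ∧ s • p x + t • p y = w := by
      simpa [projectiveClosure] using hst
    obtain rfl := eq_neg_of_add_eq_zero_right hone
    rw [neg_smul, ← sub_eq_add_neg, ← smul_sub] at hw ⊢
    exact Submodule.span_singleton_smul_eq (smul_ne_zero_iff.1 hw).1.isUnit _
  · intro hspan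
    obtain ⟨s, rfl⟩ := Submodule.mem_span_singleton.1
      (hspan ▸ Submodule.mem_span_singleton_self w)
    exact ⟨s, -s, by simp [projectiveClosure, sub_eq_add_neg]⟩

theorem three_le_card_spanLine (hp : Function.Injective p) (hxy : x ≠ y) :
    3 ≤ #(spanLine K (projectiveClosure K p) (.inl x) (.inl y)) := by
  classical
  let D : {D // D ∈ directions K p} := ⟨_, mem_directions.2 ⟨x, y, hxy, rfl⟩⟩
  have hsub : {.inl x, .inl y, .inr D} ⊆ spanLine K (projectiveClosure K p) (.inl x) (.inl y) := by
    simp only [insert_subset_iff, singleton_subset_iff]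
    exact ⟨left_mem_spanLine, right_mem_spanLine, (inr_mem_spanLine_iff hp).2 rfl⟩
  refine le_trans ?_ (card_le_card hsub)
  simp [hxy]

theorem finrank_vectorSpan_lt_finrank_span_projectiveClosure [Nonempty α] :
    finrank K (vectorSpan K (Set.range p)) <
      finrank K (Submodule.span K (Set.range (projectiveClosure K p))) := by
  obtain ⟨x⟩ := ‹Nonempty α›
  have hmem (c) : projectiveClosure K p c ∈ Submodule.span K (Set.range (projectiveClosure K p)) :=
    Submodule.subset_span ⟨c, rfl⟩
  have hfinite := FiniteDimensional.span_of_finite K (Set.finite_range (projectiveClosure K p))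
  rw [(Submodule.equivMapOfInjective _ (LinearMap.inr_injective (R := K) (M := K)) _).finrank_eq]
  refine Submodule.finrank_lt_finrank_of_lt
    (SetLike.lt_iff_le_and_exists.2 ⟨?_, _, hmem (.inl x), ?_⟩)
  · rw [vectorSpan_range_eq_span_range_vsub_right K p x, Submodule.map_span, Submodule.span_le]
    rintro _ ⟨_, ⟨y, rfl⟩, rfl⟩
    have := Submodule.sub_mem _ (hmem (.inl y)) (hmem (.inl x))
    simpa [projectiveClosure] using this
  · rintro ⟨w, -, hw⟩
    simpa [projectiveClosure] using congrArg Prod.fst hw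

end ProjectiveClosure

section RealDirections

variable {V α : Type*} [AddCommGroup V] [Module ℝ V] [Fintype α] {p : α → V}

theorem finrank_add_one_mul_card_sub_one_le [Nontrivial α] (hp : Function.Injective p) :
    (finrank ℝ (vectorSpan ℝ (Set.range p)) + 1 : ℝ) * (Fintype.card α - 1) ≤
      6 * (Fintype.card α + 2 * #(directions ℝ p)) := by
  classical
  set P : Finset (α ⊕ {D // D ∈ directions ℝ p}) := univ.map .inl
  have hP : #P = Fintype.card α := by simp [P]
  have hPc : #Pᶜ = #(directions ℝ p) := by
    rw [card_compl, Fintype.card_sum, hP, Fintype.card_coe, Nat.add_sub_cancel_left]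
  have hinl (x : α) : .inl x ∈ P := by simp [P]
  have hline {q : Finset (α ⊕ {D // D ∈ directions ℝ p}) → Prop} :
      (∀ l ∈ connectingLines ℝ (projectiveClosure ℝ p) P, q l) ↔
        ∀ x y, x ≠ y → q (spanLine ℝ (projectiveClosure ℝ p) (.inl x) (.inl y)) := by
    simp [forall_mem_connectingLines, P]
  have hjoin {x y : α} (hxy : x ≠ y) := spanLine_mem_connectingLines
    (v := projectiveClosure ℝ p) (K := ℝ) (hinl x) (hinl y) (Sum.inl_injective.ne hxy)
  have hmain := finrank_span_mul_card_sub_one_le (P := P)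
    (pairwise_linearIndependent_projectiveClosure hp)
    (hline.2 fun x y hxy ↦ ?_) (fun c ↦ ?_) (hline.2 fun x y _ a ha b hb haP hbP ↦ ?_)
  · have hlt := Nat.succ_le_of_lt
      (finrank_vectorSpan_lt_finrank_span_projectiveClosure (K := ℝ) (p := p))
    have hcard : 1 ≤ Fintype.card α := Fintype.card_pos
    rw [hPc, hP, Fintype.card_sum, Fintype.card_coe] at hmain
    push_cast at hmain
    rify at hlt hcard
    linarith [mul_le_mul_of_nonneg_right hlt (sub_nonneg.2 hcard)]
  · exact three_le_card_spanLine hp hxy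
  · obtain x | ⟨D, hD⟩ := c
    · obtain ⟨y, hyx⟩ := exists_ne x
      exact ⟨_, hjoin hyx.symm, left_mem_spanLine⟩
    · obtain ⟨x, y, hxy, rfl⟩ := mem_directions.1 hD
      exact ⟨_, hjoin hxy, (inr_mem_spanLine_iff hp).2 rfl⟩
  · obtain x' | D := a
    · exact absurd (hinl x') haP
    obtain y' | D' := b
    · exact absurd (hinl y') hbP
    rw [inr_mem_spanLine_iff hp] at ha hb
    exact congrArg _ (Subtype.ext (ha.trans hb.symm))

theorem mul_card_div_le_card_directions (hp : Function.Injective p) {d : ℕ} (hd : 2 ≤ d)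
    (hdim : d ≤ finrank ℝ (vectorSpan ℝ (Set.range p))) (hcard : 4 * (d + 1) ≤ Fintype.card α) :
    (d * Fintype.card α / 48 : ℝ) ≤ #(directions ℝ p) := by
  obtain hd6 | hd7 := le_or_gt d 6
  · have hplanar := card_sub_one_le_four_mul_card_directions hp (hd.trans hdim)
    rw [Nat.sub_le_iff_le_add] at hplanar
    rify at hplanar hd6 hcard hd
    nlinarith
  · have : Nontrivial α := Fintype.one_lt_card_iff_nontrivial.1 (by lia)
    have hdesign := finrank_add_one_mul_card_sub_one_le hp
    replace hd7 : 7 ≤ d := hd7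
    rify at hd7 hcard hdim
    have hmono : (d + 1 : ℝ) * (Fintype.card α - 1) ≤
        (finrank ℝ (vectorSpan ℝ (Set.range p)) + 1) * (Fintype.card α - 1) := by
      gcongr
      linarith
    nlinarith [mul_le_mul_of_nonneg_right hd7 (Nat.cast_nonneg (α := ℝ) (Fintype.card α))]

end RealDirections

section Subfield

variable {K L V α ι : Type*} [Field K] [AddCommGroup V] [Module K V] {p : α → V}

theorem card_directions_le_card_directions [Field L] [Algebra K L] [Module L V]
    [IsScalarTower K L V] [Fintype α] (p : α → V) : #(directions L p) ≤ #(directions K p) := by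
  classical
  refine (card_le_card fun D hD ↦ ?_).trans
    (card_image_le (s := directions K p) (f := fun D ↦ Submodule.span L (D : Set V)))
  obtain ⟨x, y, hxy, rfl⟩ := mem_directions.1 hD
  exact mem_image.2 ⟨_, mem_directions.2 ⟨x, y, hxy, rfl⟩, Submodule.span_span_of_tower K L _⟩

theorem choose_two_le_card_directions [Fintype α] (hp : AffineIndependent K p) :
    (Fintype.card α).choose 2 ≤ #(directions K p) := by
  classical
  rw [← card_univ, ← card_powersetCard]
  refine card_le_card_of_injOn (fun e ↦ vectorSpan K (p '' e)) (fun e he ↦ ?_)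
    fun e he e' _ heq ↦ ?_
  · obtain ⟨x, y, hxy, rfl⟩ := card_eq_two.1 (mem_powersetCard.1 he).2
    refine mem_directions.2 ⟨x, y, hxy, ?_⟩
    simp only [coe_pair, Set.image_pair, vectorSpan_pair, vsub_eq_sub]
  · obtain h | ⟨h, -⟩ := hp.vectorSpan_image_eq_iff.1 heq
    · exact coe_injective h
    · have := card_le_one_iff_subsingleton_coe.2 h.coe_sort
      have := (mem_powersetCard.1 he).2
      lia

theorem finrank_add_one_choose_two_le_card_directions [Fintype α] (p : α → V) :
    (finrank K (vectorSpan K (Set.range p)) + 1).choose 2 ≤ #(directions K p) := by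
  classical
  cases isEmpty_or_nonempty α
  · rw [Set.range_eq_empty, vectorSpan_empty, finrank_bot]
    exact Nat.zero_le _
  obtain ⟨t, htp, hspan, ht⟩ := exists_affineIndependent K V (Set.range p)
  have : Fintype t := ((Set.finite_range p).subset htp).fintype
  have : Nonempty t := by
    rw [Set.nonempty_coe_sort, ← affineSpan_nonempty K, hspan, affineSpan_nonempty]
    exact Set.range_nonempty p
  have hcard := ht.finrank_vectorSpan_add_one
  rw [Subtype.range_coe, ← direction_affineSpan, hspan, direction_affineSpan] at hcard
  rw [hcard]
  refine (choose_two_le_card_directions ht).trans (card_le_card fun D hD ↦ ?_)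
  obtain ⟨⟨_, hx⟩, ⟨_, hy⟩, hxy, rfl⟩ := mem_directions.1 hD
  obtain ⟨⟨x, rfl⟩, ⟨y, rfl⟩⟩ := htp hx, htp hy
  exact mem_directions.2 ⟨x, y, fun h ↦ hxy (by simp [h]), rfl⟩

theorem exists_card_le_finrank_forall_mem_span_image [Finite ι] (u : ι → V) (S : Submodule K V)
    [FiniteDimensional K S] :
    ∃ I : Finset ι, #I ≤ finrank K S ∧ ∀ i, u i ∈ S → u i ∈ Submodule.span K (u '' I) := by
  obtain ⟨b, hbS, -, hspan, hb⟩ :=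
    exists_linearIndepOn_extension (linearIndepOn_empty K u) (Set.empty_subset (u ⁻¹' S))
  lift b to Finset ι using b.toFinite
  refine ⟨b, ?_, fun i hi ↦ hspan ⟨i, hi, rfl⟩⟩
  have hle : Submodule.span K (Set.range fun i : b ↦ u i) ≤ S :=
    Submodule.span_le.2 (Set.range_subset_iff.2 fun i ↦ hbS i.2)
  calc #b = finrank K (Submodule.span K (Set.range fun i : b ↦ u i)) := by
        rw [finrank_span_eq_card (b := fun i : b ↦ u i) hb, Fintype.card_coe]
    _ ≤ finrank K S := Submodule.finrank_mono hle

theorem exists_card_le_finrank_card_directions_le_ncard [Fintype α] [Finite ι] {u : ι → V}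
    (hp : Function.Injective p) (hu : ∀ x y, ∃ i, p x - p y ∈ Submodule.span K {u i}) :
    ∃ I : Finset ι, #I ≤ finrank K (vectorSpan K (Set.range p)) ∧
      #(directions K p) ≤ {i | u i ∈ Submodule.span K (u '' I)}.ncard := by
  obtain ⟨I, hI, hspan⟩ :=
    exists_card_le_finrank_forall_mem_span_image u (vectorSpan K (Set.range p))
  refine ⟨I, hI, ?_⟩
  rw [Set.ncard_eq_toFinset_card _ (Set.toFinite _)]
  refine card_directions_le (u := u) hp fun x y hxy ↦ ?_
  obtain ⟨i, hi⟩ := hu x y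
  refine ⟨i, (Set.Finite.mem_toFinset _).2 (hspan i ?_), hi⟩
  obtain ⟨c, hc⟩ := Submodule.mem_span_singleton.1 hi
  have hc0 : c ≠ 0 := by
    rintro rfl
    exact hxy (hp (sub_eq_zero.1 (by rw [← hc, zero_smul])))
  rw [← Submodule.smul_mem_iff _ hc0, hc]
  exact vsub_mem_vectorSpan K ⟨x, rfl⟩ ⟨y, rfl⟩

theorem mem_span_subfield_image_iff [Field L] [Module L V] [Fintype ι] {F : Subfield L}
    {u : ι → V} {I : Finset ι} {v : V} :
    v ∈ Submodule.span F (u '' I) ↔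
      ∃ c : ι → L, (∀ i, c i ∈ F) ∧ (∀ i ∉ I, c i = 0) ∧ v = ∑ i, c i • u i := by
  classical
  rw [Finsupp.mem_span_image_iff_linearCombination]
  constructor
  · rintro ⟨c, hcI, rfl⟩
    refine ⟨fun i ↦ c i, fun i ↦ (c i).2, fun i hi ↦ ?_, ?_⟩
    · simp only [(Finsupp.mem_supported' F c).1 hcI i hi, ZeroMemClass.coe_zero]
    · rw [Finsupp.linearCombination_apply, Finsupp.sum_fintype _ _ fun i ↦ zero_smul F (u i)]
      rfl
  · rintro ⟨c, hcF, hcI, rfl⟩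
    refine ⟨Finsupp.equivFunOnFinite.symm fun i ↦ ⟨c i, hcF i⟩, ?_, ?_⟩
    · exact (Finsupp.mem_supported' F _).2 fun i hi ↦ Subtype.ext (hcI i hi)
    · rw [Finsupp.linearCombination_apply, Finsupp.sum_fintype _ _ fun i ↦ zero_smul F (u i)]
      rfl

end Subfield

/- AM-GM absorbs the linear term `d * m` into the fraction `μ / d` of the quadratic bound on `j`;
the remaining fraction `1 - μ / d` of the linear bound still exceeds `(d / 48 - μ) * n`. -/
theorem mul_add_le_of_sq_div_two_le {d μ n m j : ℝ} (hμ : 0 < μ) (hμd : μ ≤ d)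
    (hn : (d ^ 3 / μ + 2) / μ ≤ n) (hlin : d * n / 48 ≤ j) (hsq : m ^ 2 / 2 ≤ j) :
    d * m + (1 / 48 * d - μ) * n + 1 ≤ j := by
  have hd : 0 < d := hμ.trans_le hμd
  rw [div_le_iff₀ hμ] at hn
  have hdm : d * m ≤ μ / d * (m ^ 2 / 2) + d ^ 3 / μ / 2 := by
    have := sq_nonneg (μ * m - d ^ 2)
    field_simp
    nlinarith
  have hfrac : μ / d ≤ 1 := (div_le_one hd).2 hμd
  calc d * m + (1 / 48 * d - μ) * n + 1
      ≤ μ / d * (m ^ 2 / 2) + (d ^ 3 / μ + 2) / 2 + (1 / 48 * d - μ) * n := by linarith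
    _ ≤ μ / d * (m ^ 2 / 2) + (1 - μ / d) * (d * n / 48) := by
        have hd3 : 0 ≤ d ^ 3 / μ := by positivity
        have hfrac : (1 - μ / d) * (d * n / 48) = (d * n - n * μ) / 48 := by field_simp
        linarith
    _ ≤ μ / d * j + (1 - μ / d) * j := by
        have := sub_nonneg.2 hfrac
        gcongr
    _ = j := by ring

/-- **Lemma 3.1** (with `b = 1/48`). Let `d ≥ 2` and `0 < μ < 1`. For all
sufficiently large `n` the following holds. Let `F` be a subfield of `ℝ`, `V` a
real vector space, `u₁, …, u_k ∈ V` nonzero vectors, and `p₁, …, p_n ∈ V`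
distinct vectors not all lying in a common `(d−1)`-dimensional affine subspace
of `V`. If every difference `p_x − p_y` lies in the `F`-span of some single
`u_i`, then there is a subset `I ⊆ {1, …, k}` such that `u_ℓ` lies in the
`F`-span of `{u_i : i ∈ I}` for at least `d·|I| + (d/48 − μ)·n + 1` indices
`ℓ`. -/
theorem lemma_3_1 (d : ℕ) (hd : 2 ≤ d) (μ : ℝ) (hμ0 : 0 < μ) (hμ1 : μ < 1) :
    ∃ n₀ : ℕ, ∀ n : ℕ, n₀ ≤ n →
      ∀ (V : Type u) [AddCommGroup V] [Module ℝ V],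
      ∀ (F : Subfield ℝ) (k : ℕ) (u : Fin k → V) (p : Fin n → V),
        (∀ i, u i ≠ 0) →
        Function.Injective p →
        (¬ ∃ W : AffineSubspace ℝ V,
            Module.rank ℝ W.direction ≤ ((d - 1 : ℕ) : Cardinal) ∧ ∀ x, p x ∈ W) →
        (∀ x y : Fin n, ∃ i : Fin k, ∃ c : F, p x - p y = (c : ℝ) • u i) →
        ∃ I : Finset (Fin k),
          (d : ℝ) * I.card + ((1 / 48 : ℝ) * d - μ) * n + 1 ≤
            ({ℓ : Fin k | ∃ c : Fin k → ℝ, (∀ i, c i ∈ F) ∧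
                (∀ i ∉ I, c i = 0) ∧ u ℓ = ∑ i, c i • u i} : Set (Fin k)).ncard := by
  refine ⟨max ⌈((d : ℝ) ^ 3 / μ + 2) / μ⌉₊ (4 * (d + 1)), fun n hn V _ _ F k u p _ hp hW hu ↦ ?_⟩
  obtain ⟨hceil, hcard⟩ := max_le_iff.1 hn
  have hdim : d ≤ finrank ℝ (vectorSpan ℝ (Set.range p)) := by
    by_contra! hlt
    refine hW ⟨affineSpan ℝ (Set.range p), ?_, fun x ↦ mem_affineSpan ℝ ⟨x, rfl⟩⟩
    rw [direction_affineSpan, ← finrank_eq_rank]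
    exact_mod_cast Nat.le_sub_one_of_lt hlt
  obtain ⟨I, hI, hdir⟩ := exists_card_le_finrank_card_directions_le_ncard (K := F) (u := u) hp
    fun x y ↦ (hu x y).imp fun i ⟨c, hc⟩ ↦ Submodule.mem_span_singleton.2 ⟨c, hc.symm⟩
  have hlin : (d * n / 48 : ℝ) ≤ #(directions F p) := by
    have hreal := mul_card_div_le_card_directions hp hd hdim (by rwa [Fintype.card_fin])
    rw [Fintype.card_fin] at hreal
    exact hreal.trans (mod_cast card_directions_le_card_directions p)
  have hsq : (#I : ℝ) ^ 2 / 2 ≤ #(directions F p) := by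
    have hchoose := (Nat.choose_le_choose 2 (Nat.succ_le_succ hI)).trans
      (finrank_add_one_choose_two_le_card_directions (K := F) p)
    rify [Nat.cast_choose_two] at hchoose
    linarith [Nat.cast_nonneg (α := ℝ) #I]
  have hμd : μ ≤ d := hμ1.le.trans (mod_cast one_le_two.trans hd)
  simp_rw [← mem_span_subfield_image_iff]
  exact ⟨I, (mul_add_le_of_sq_div_two_le hμ0 hμd (Nat.ceil_le.1 hceil) hlin hsq).trans
    (Nat.cast_le.2 hdir)⟩
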